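/- arXiv:1908.00514 — 7 statements merged into one kernel-verified Lean document; each statement's English description precedes it below -/
import Mathlib

section
/- Let (J, v, π) be a classical solution of (E1)–(E3) on [0,L]×[0,T] with boundary condition v(0,t) = v(L,t) = 0. Then the function t ↦ ∫₀ᴸ ( ρ₀(y) v(y,t)²/2 + J(y,t) π(y,t)/(γ−1) ) dy is constant on [0,T]; in particular it equals ∫₀ᴸ ( ρ₀ v₀²/2 + J₀ π₀/(γ−1) ) dy for every t ∈ [0,T]. -/
open Set MeasureTheory

/-- A classical solution `(J, v, π)` of the Lagrangian 1D non-heat-conductive compressible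
Navier–Stokes system (E1)–(E3) on `[0,L] × [0,T]`, together with its partial derivatives
`Jt = ∂ₜJ`, `vy = ∂_y v`, `vt = ∂ₜv`, `w = ∂_y((∂_y v)/J)`, `πy = ∂_y π`, `πt = ∂ₜπ`,
all continuous on `[0,L] × [0,T]`, and `J > 0` everywhere. -/
structure ClassicalSolution (L T μ γ : ℝ) (ρ₀ : ℝ → ℝ)
    (J v π Jt vy vt w πy πt : ℝ → ℝ → ℝ) : Prop where
  Jpos : ∀ y ∈ Set.Icc (0:ℝ) L, ∀ t ∈ Set.Icc (0:ℝ) T, 0 < J y t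
  contJ : ContinuousOn (fun p : ℝ × ℝ => J p.1 p.2) (Set.Icc 0 L ×ˢ Set.Icc 0 T)
  contv : ContinuousOn (fun p : ℝ × ℝ => v p.1 p.2) (Set.Icc 0 L ×ˢ Set.Icc 0 T)
  contPi : ContinuousOn (fun p : ℝ × ℝ => π p.1 p.2) (Set.Icc 0 L ×ˢ Set.Icc 0 T)
  hJt : ∀ y ∈ Set.Icc (0:ℝ) L, ∀ t ∈ Set.Icc (0:ℝ) T,
    HasDerivWithinAt (fun s => J y s) (Jt y t) (Set.Icc 0 T) t
  hvy : ∀ y ∈ Set.Icc (0:ℝ) L, ∀ t ∈ Set.Icc (0:ℝ) T,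
    HasDerivWithinAt (fun x => v x t) (vy y t) (Set.Icc 0 L) y
  hvt : ∀ y ∈ Set.Icc (0:ℝ) L, ∀ t ∈ Set.Icc (0:ℝ) T,
    HasDerivWithinAt (fun s => v y s) (vt y t) (Set.Icc 0 T) t
  hw : ∀ y ∈ Set.Icc (0:ℝ) L, ∀ t ∈ Set.Icc (0:ℝ) T,
    HasDerivWithinAt (fun x => vy x t / J x t) (w y t) (Set.Icc 0 L) y
  hPiy : ∀ y ∈ Set.Icc (0:ℝ) L, ∀ t ∈ Set.Icc (0:ℝ) T,
    HasDerivWithinAt (fun x => π x t) (πy y t) (Set.Icc 0 L) y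
  hPit : ∀ y ∈ Set.Icc (0:ℝ) L, ∀ t ∈ Set.Icc (0:ℝ) T,
    HasDerivWithinAt (fun s => π y s) (πt y t) (Set.Icc 0 T) t
  contJt : ContinuousOn (fun p : ℝ × ℝ => Jt p.1 p.2) (Set.Icc 0 L ×ˢ Set.Icc 0 T)
  contvy : ContinuousOn (fun p : ℝ × ℝ => vy p.1 p.2) (Set.Icc 0 L ×ˢ Set.Icc 0 T)
  contvt : ContinuousOn (fun p : ℝ × ℝ => vt p.1 p.2) (Set.Icc 0 L ×ˢ Set.Icc 0 T)
  contw : ContinuousOn (fun p : ℝ × ℝ => w p.1 p.2) (Set.Icc 0 L ×ˢ Set.Icc 0 T)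
  contPiy : ContinuousOn (fun p : ℝ × ℝ => πy p.1 p.2) (Set.Icc 0 L ×ˢ Set.Icc 0 T)
  contPit : ContinuousOn (fun p : ℝ × ℝ => πt p.1 p.2) (Set.Icc 0 L ×ˢ Set.Icc 0 T)
  eq1 : ∀ y ∈ Set.Icc (0:ℝ) L, ∀ t ∈ Set.Icc (0:ℝ) T, Jt y t = vy y t
  eq2 : ∀ y ∈ Set.Icc (0:ℝ) L, ∀ t ∈ Set.Icc (0:ℝ) T,
    ρ₀ y * vt y t - μ * w y t + πy y t = 0
  eq3 : ∀ y ∈ Set.Icc (0:ℝ) L, ∀ t ∈ Set.Icc (0:ℝ) T,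
    πt y t + γ * (vy y t / J y t) * π y t = μ * (γ - 1) * (vy y t / J y t) ^ 2

theorem aux_ftc (a b : ℝ) (hab : a ≤ b) (c d : ℝ) (hac : c ≤ a) (hbd : b ≤ d) (f f' : ℝ → ℝ)
    (hf : ∀ x ∈ Icc c d, HasDerivWithinAt f (f' x) (Icc c d) x)
    (hc : ContinuousOn f' (Icc c d)) : ∫ x in a..b, f' x = f b - f a := by
  have hs : Icc a b ⊆ Icc c d := Icc_subset_Icc hac hbd
  apply intervalIntegral.integral_eq_sub_of_hasDerivAt_of_le hab
  · exact fun x hx => ((hf x (hs hx)).continuousWithinAt).mono hs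
  · intro x hx
    exact (hf x (hs (Ioo_subset_Icc_self hx))).hasDerivAt
      (Icc_mem_nhds (lt_of_le_of_lt hac hx.1) (lt_of_lt_of_le hx.2 hbd))
  · apply ContinuousOn.intervalIntegrable
    rw [uIcc_of_le hab]
    exact hc.mono hs

/-- (Basic energy identity, second part of Proposition 2.2.)
For a classical solution of (E1)–(E3) with `v(0,t) = v(L,t) = 0`, the energy
`∫₀ᴸ (ρ₀ v²/2 + Jπ/(γ-1)) dy` is constant in time, equal to its initial value. -/
theorem energy_identity
    (L T μ γ : ℝ) (hL : 0 < L) (hT : 0 < T) (hμ : 0 < μ) (hγ : 1 < γ)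
    (ρ₀ : ℝ → ℝ) (hρ₀ : ContinuousOn ρ₀ (Icc 0 L))
    (J v π Jt vy vt w πy πt : ℝ → ℝ → ℝ)
    (hsol : ClassicalSolution L T μ γ ρ₀ J v π Jt vy vt w πy πt)
    (hbc : ∀ t ∈ Icc (0:ℝ) T, v 0 t = 0 ∧ v L t = 0) :
    ∀ t ∈ Icc (0:ℝ) T,
      (∫ y in (0:ℝ)..L, (ρ₀ y * (v y t) ^ 2 / 2 + J y t * π y t / (γ - 1)))
        = ∫ y in (0:ℝ)..L, (ρ₀ y * (v y 0) ^ 2 / 2 + J y 0 * π y 0 / (γ - 1)) := by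
  intro t ht
  obtain ⟨Jpos, contJ, contv, contPi, hJt, hvy, hvt, hw, hPiy, hPit, contJt, contvy, contvt,
    contw, contPiy, contPit, eq1, eq2, eq3⟩ := hsol
  have hγ' : γ - 1 ≠ 0 := by linarith
  have hρc : ContinuousOn (fun p : ℝ × ℝ => ρ₀ p.1) (Icc 0 L ×ˢ Icc 0 T) :=
    hρ₀.comp continuousOn_fst (fun p hp => hp.1)
  set e : ℝ → ℝ → ℝ := fun y s => ρ₀ y * (v y s) ^ 2 / 2 + J y s * π y s / (γ - 1) with he
  set g : ℝ → ℝ → ℝ := fun y s => ρ₀ y * v y s * vt y s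
    + (Jt y s * π y s + J y s * πt y s) / (γ - 1) with hg
  have ce : ContinuousOn (fun p : ℝ × ℝ => e p.1 p.2) (Icc 0 L ×ˢ Icc 0 T) :=
    ((hρc.mul (contv.pow 2)).div_const 2).add ((contJ.mul contPi).div_const _)
  have cg : ContinuousOn (fun p : ℝ × ℝ => g p.1 p.2) (Icc 0 L ×ˢ Icc 0 T) :=
    ((hρc.mul contv).mul contvt).add (((contJt.mul contPi).add (contJ.mul contPit)).div_const _)
  have sy : ∀ f : ℝ → ℝ → ℝ,
      ContinuousOn (fun p : ℝ × ℝ => f p.1 p.2) (Icc 0 L ×ˢ Icc 0 T) →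
      ∀ s ∈ Icc (0:ℝ) T, ContinuousOn (fun y => f y s) (Icc 0 L) := by
    intro f hf s hs
    exact hf.comp (f := fun y : ℝ => (y, s)) (by fun_prop) (fun y hy => ⟨hy, hs⟩)
  have st : ∀ f : ℝ → ℝ → ℝ,
      ContinuousOn (fun p : ℝ × ℝ => f p.1 p.2) (Icc 0 L ×ˢ Icc 0 T) →
      ∀ y ∈ Icc (0:ℝ) L, ContinuousOn (fun s => f y s) (Icc 0 T) := by
    intro f hf y hy
    exact hf.comp (f := fun s : ℝ => (y, s)) (by fun_prop) (fun s hs => ⟨hy, hs⟩)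
  have ii : ∀ s ∈ Icc (0:ℝ) T, IntervalIntegrable (fun y => e y s) volume 0 L := by
    intro s hs
    apply ContinuousOn.intervalIntegrable
    rw [uIcc_of_le hL.le]
    exact sy e ce s hs
  have h1 : ∀ y ∈ Icc (0:ℝ) L, ∫ s in (0:ℝ)..t, g y s = e y t - e y 0 := by
    intro y hy
    refine aux_ftc 0 t ht.1 0 T le_rfl ht.2 (fun s => e y s) (fun s => g y s) ?_ (st g cg y hy)
    intro s hs
    have := ((((hvt y hy s hs).pow 2).const_mul (ρ₀ y)).div_const 2).add
      (((hJt y hy s hs).mul (hPit y hy s hs)).div_const (γ - 1))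
    refine this.congr_deriv ?_
    simp only [hg]
    norm_num
    ring
  have h2 : ∀ s ∈ Icc (0:ℝ) T, ∫ y in (0:ℝ)..L, g y s = 0 := by
    intro s hs
    have := aux_ftc 0 L hL.le 0 L le_rfl le_rfl
      (fun y => v y s * (μ * (vy y s / J y s) - π y s)) (fun y => g y s) ?_ (sy g cg s hs)
    · rw [this]
      simp [(hbc s hs).1, (hbc s hs).2]
    intro y hy
    have := (hvy y hy s hs).mul (((hw y hy s hs).const_mul μ).sub (hPiy y hy s hs))
    refine this.congr_deriv ?_
    have hJ := (Jpos y hy s hs).ne'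
    have e1 := eq1 y hy s hs
    have e2 : ρ₀ y * vt y s = μ * w y s - πy y s := by linarith [eq2 y hy s hs]
    have e3 : πt y s = μ * (γ - 1) * (vy y s / J y s) ^ 2 - γ * (vy y s / J y s) * π y s := by
      linarith [eq3 y hy s hs]
    have e4 : g y s = v y s * (ρ₀ y * vt y s)
        + (Jt y s * π y s + J y s * πt y s) / (γ - 1) := by simp only [hg]; ring
    rw [e4, e1, e2, e3]
    simp only [Pi.sub_apply]
    field_simp
    ring
  have hswap : ∫ y in (0:ℝ)..L, ∫ s in (0:ℝ)..t, g y s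
      = ∫ s in (0:ℝ)..t, ∫ y in (0:ℝ)..L, g y s := by
    simp only [intervalIntegral.integral_of_le hL.le, intervalIntegral.integral_of_le ht.1]
    apply integral_integral_swap
    rw [Measure.prod_restrict]
    exact (cg.integrableOn_compact (isCompact_Icc.prod isCompact_Icc)).mono_set
      (prod_mono Ioc_subset_Icc_self
        (Ioc_subset_Icc_self.trans (Icc_subset_Icc_right ht.2)))
  have h3 : ∫ s in (0:ℝ)..t, ∫ y in (0:ℝ)..L, g y s = 0 := by
    rw [intervalIntegral.integral_congr (g := fun _ => (0:ℝ))]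
    · simp
    · intro s hs
      rw [uIcc_of_le ht.1] at hs
      exact h2 s ⟨hs.1, hs.2.trans ht.2⟩
  have h4 : ∫ y in (0:ℝ)..L, ∫ s in (0:ℝ)..t, g y s = ∫ y in (0:ℝ)..L, (e y t - e y 0) := by
    apply intervalIntegral.integral_congr
    intro y hy
    rw [uIcc_of_le hL.le] at hy
    exact h1 y hy
  rw [intervalIntegral.integral_sub (ii t ht) (ii 0 ⟨le_rfl, hT.le⟩), hswap, h3] at h4
  exact (sub_eq_zero.mp h4.symm)
end

section
/- Let (J, v, π) be a classical solution of (E1)–(E3) on [0,L]×[0,T] with boundary condition v(0,t) = v(L,t) = 0, and assume additionally that ∂_y J exists with the mixed derivative ∂_t ∂_y J continuous on [0,L]×[0,T]. Define F(y,t) := ∫₀^y ρ₀(ξ)( v(ξ,t) − v₀(ξ) ) dξ − μ log( J(y,t)/J₀(y) ) + ∫₀ᵗ π(y,τ) dτ. Then F(y,t) = F(z,t) for all y, z ∈ [0,L] and all t ∈ [0,T]; that is, F is independent of the spatial variable. -/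
open Set MeasureTheory

theorem ftc_aux {f f' : ℝ → ℝ} {b B : ℝ} (hb : b ∈ Icc (0:ℝ) B)
    (hd : ∀ x ∈ Icc (0:ℝ) B, HasDerivWithinAt f (f' x) (Icc 0 B) x)
    (hc : ContinuousOn f' (Icc 0 B)) : ∫ x in (0:ℝ)..b, f' x = f b - f 0 := by
  have hsub : Icc (0:ℝ) b ⊆ Icc 0 B := Icc_subset_Icc le_rfl hb.2
  refine intervalIntegral.integral_eq_sub_of_hasDerivAt_of_le hb.1 ?_ ?_ ?_
  · intro x hx
    exact (hd x (hsub hx)).continuousWithinAt.mono hsub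
  · intro x hx
    exact (hd x (hsub (Ioo_subset_Icc_self hx))).hasDerivAt
      (Icc_mem_nhds hx.1 (hx.2.trans_le hb.2))
  · apply ContinuousOn.intervalIntegrable
    rw [uIcc_of_le hb.1]
    exact hc.mono hsub

theorem slice_t {f : ℝ → ℝ → ℝ} {L T y : ℝ} (hy : y ∈ Icc (0:ℝ) L)
    (h : ContinuousOn (fun p : ℝ × ℝ => f p.1 p.2) (Icc 0 L ×ˢ Icc 0 T)) :
    ContinuousOn (fun t => f y t) (Icc 0 T) :=
  h.comp (f := fun t : ℝ => (y, t)) (by fun_prop) (fun _ ht => ⟨hy, ht⟩)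

theorem slice_y {f : ℝ → ℝ → ℝ} {L T t : ℝ} (ht : t ∈ Icc (0:ℝ) T)
    (h : ContinuousOn (fun p : ℝ × ℝ => f p.1 p.2) (Icc 0 L ×ˢ Icc 0 T)) :
    ContinuousOn (fun y => f y t) (Icc 0 L) :=
  h.comp (f := fun y : ℝ => (y, t)) (by fun_prop) (fun _ hy => ⟨hy, ht⟩)

/-- The quantity
`F(y,t) = ∫₀ʸ ρ₀(v - v₀) dξ - μ log(J/J₀) + ∫₀ᵗ π dτ` is independent of the spatial
variable (key step toward the lower bound of `J`, Proposition 2.3). -/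
theorem F_independent_of_space
    (L T μ γ : ℝ) (hL : 0 < L) (hT : 0 < T) (hμ : 0 < μ) (hγ : 1 < γ)
    (ρ₀ : ℝ → ℝ) (hρ₀ : ContinuousOn ρ₀ (Icc 0 L))
    (J v π Jt vy vt w πy πt Jy Jyt : ℝ → ℝ → ℝ)
    (hsol : ClassicalSolution L T μ γ ρ₀ J v π Jt vy vt w πy πt)
    (hbc : ∀ t ∈ Icc (0:ℝ) T, v 0 t = 0 ∧ v L t = 0)
    (hJy : ∀ y ∈ Icc (0:ℝ) L, ∀ t ∈ Icc (0:ℝ) T,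
      HasDerivWithinAt (fun x => J x t) (Jy y t) (Icc 0 L) y)
    (hJyt : ∀ y ∈ Icc (0:ℝ) L, ∀ t ∈ Icc (0:ℝ) T,
      HasDerivWithinAt (fun s => Jy y s) (Jyt y t) (Icc 0 T) t)
    (hJytcont : ContinuousOn (fun p : ℝ × ℝ => Jyt p.1 p.2) (Icc 0 L ×ˢ Icc 0 T)) :
    ∀ y ∈ Icc (0:ℝ) L, ∀ z ∈ Icc (0:ℝ) L, ∀ t ∈ Icc (0:ℝ) T,
      ((∫ ξ in (0:ℝ)..y, ρ₀ ξ * (v ξ t - v ξ 0)) - μ * Real.log (J y t / J y 0)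
          + ∫ τ in (0:ℝ)..t, π y τ)
        = ((∫ ξ in (0:ℝ)..z, ρ₀ ξ * (v ξ t - v ξ 0)) - μ * Real.log (J z t / J z 0)
          + ∫ τ in (0:ℝ)..t, π z τ) := by
  have h0L : (0:ℝ) ∈ Icc (0:ℝ) L := ⟨le_rfl, hL.le⟩
  have h0T : (0:ℝ) ∈ Icc (0:ℝ) T := ⟨le_rfl, hT.le⟩
  suffices H : ∀ y ∈ Icc (0:ℝ) L, ∀ t ∈ Icc (0:ℝ) T,
      ((∫ ξ in (0:ℝ)..y, ρ₀ ξ * (v ξ t - v ξ 0)) - μ * Real.log (J y t / J y 0)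
          + ∫ τ in (0:ℝ)..t, π y τ)
        = - μ * Real.log (J 0 t / J 0 0) + ∫ τ in (0:ℝ)..t, π 0 τ by
    intro y hy z hz t ht
    rw [H y hy t ht, H z hz t ht]
  intro y hy t ht
  have hsubL : Icc (0:ℝ) y ⊆ Icc 0 L := Icc_subset_Icc le_rfl hy.2
  have hsubT : Icc (0:ℝ) t ⊆ Icc 0 T := Icc_subset_Icc le_rfl ht.2
  have hG : ContinuousOn (fun p : ℝ × ℝ => μ * w p.1 p.2 - πy p.1 p.2)
      (Icc 0 L ×ˢ Icc 0 T) := (continuousOn_const.mul hsol.contw).sub hsol.contPiy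
  have hswap : ∫ ξ in (0:ℝ)..y, ∫ τ in (0:ℝ)..t, (μ * w ξ τ - πy ξ τ)
      = ∫ τ in (0:ℝ)..t, ∫ ξ in (0:ℝ)..y, (μ * w ξ τ - πy ξ τ) := by
    refine MeasureTheory.intervalIntegral_intervalIntegral_swap
      (F := fun ξ τ => μ * w ξ τ - πy ξ τ) ?_
    have hI := hG.integrableOn_compact (μ := volume) (isCompact_Icc.prod isCompact_Icc)
    refine hI.mono_set ?_
    rw [uIoc_of_le hy.1, uIoc_of_le ht.1]
    exact prod_mono (Ioc_subset_Icc_self.trans hsubL) (Ioc_subset_Icc_self.trans hsubT)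
  have h1 : ∫ ξ in (0:ℝ)..y, ∫ τ in (0:ℝ)..t, (μ * w ξ τ - πy ξ τ)
      = ∫ ξ in (0:ℝ)..y, ρ₀ ξ * (v ξ t - v ξ 0) := by
    apply intervalIntegral.integral_congr
    intro x hx
    rw [uIcc_of_le hy.1] at hx
    have hx' := hsubL hx
    have := ftc_aux (f := fun s => ρ₀ x * v x s) (f' := fun s => μ * w x s - πy x s) ht
      (fun s hs => by
        have e : μ * w x s - πy x s = ρ₀ x * vt x s := by
          linarith [hsol.eq2 x hx' s hs]
        rw [e]
        exact (hsol.hvt x hx' s hs).const_mul _)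
      (slice_t (f := fun a b => μ * w a b - πy a b) hx' hG)
    simp only [this]
    ring
  have hq : ContinuousOn (fun p : ℝ × ℝ => vy p.1 p.2 / J p.1 p.2) (Icc 0 L ×ˢ Icc 0 T) :=
    hsol.contvy.div hsol.contJ (fun p hp => (hsol.Jpos p.1 hp.1 p.2 hp.2).ne')
  have hiq : ∀ x ∈ Icc (0:ℝ) L,
      IntervalIntegrable (fun τ => μ * (vy x τ / J x τ)) volume 0 t := by
    intro x hx
    apply ContinuousOn.intervalIntegrable
    rw [uIcc_of_le ht.1]
    exact continuousOn_const.mul ((slice_t (f := fun a b => vy a b / J a b) hx hq).mono hsubT)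
  have hip : ∀ x ∈ Icc (0:ℝ) L, IntervalIntegrable (fun τ => π x τ) volume 0 t := by
    intro x hx
    apply ContinuousOn.intervalIntegrable
    rw [uIcc_of_le ht.1]
    exact (slice_t hx hsol.contPi).mono hsubT
  have hlog : ∀ x ∈ Icc (0:ℝ) L,
      ∫ τ in (0:ℝ)..t, μ * (vy x τ / J x τ) = μ * Real.log (J x t / J x 0) := by
    intro x hx
    rw [intervalIntegral.integral_const_mul, ftc_aux (f := fun s => Real.log (J x s))
      (f' := fun s => vy x s / J x s) ht (fun s hs => ?_)
      (slice_t (f := fun a b => vy a b / J a b) hx hq)]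
    · rw [Real.log_div (hsol.Jpos x hx t ht).ne' (hsol.Jpos x hx 0 h0T).ne']
    · rw [← hsol.eq1 x hx s hs]
      exact (hsol.hJt x hx s hs).log (hsol.Jpos x hx s hs).ne'
  have h2 : ∫ τ in (0:ℝ)..t, ∫ ξ in (0:ℝ)..y, (μ * w ξ τ - πy ξ τ)
      = ∫ τ in (0:ℝ)..t, ((μ * (vy y τ / J y τ) - π y τ) - (μ * (vy 0 τ / J 0 τ) - π 0 τ)) := by
    apply intervalIntegral.integral_congr
    intro s hs
    rw [uIcc_of_le ht.1] at hs
    have hs' := hsubT hs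
    exact ftc_aux (f := fun x => μ * (vy x s / J x s) - π x s) hy
      (fun x hx => ((hsol.hw x hx s hs').const_mul μ).sub (hsol.hPiy x hx s hs'))
      (slice_y (f := fun a b => μ * w a b - πy a b) hs' hG)
  rw [intervalIntegral.integral_sub ((hiq y hy).sub (hip y hy)) ((hiq 0 h0L).sub (hip 0 h0L)),
    intervalIntegral.integral_sub (hiq y hy) (hip y hy),
    intervalIntegral.integral_sub (hiq 0 h0L) (hip 0 h0L), hlog y hy, hlog 0 h0L] at h2
  linarith
end

section
/- Let (J, v, π) be a classical solution of (E1)–(E3) on [0,L]×[0,T] with boundary condition v(0,t) = v(L,t) = 0, and assume additionally that ∂_y J exists with ∂_t ∂_y J continuous on [0,L]×[0,T]. Define B(y,t) := exp( (1/μ) ∫₀^y ρ₀(ξ)( v₀(ξ) − v(ξ,t) ) dξ ), and let H : [0,T] → (0,∞) with H(0) = 1 be such that ( J/J₀ ) H B = exp( (1/μ) ∫₀ᵗ π dτ ) on [0,L]×[0,T]. Then for all (y,t) ∈ [0,L]×[0,T]: J(y,t) H(t) B(y,t) = J₀(y) + (1/μ) ∫₀ᵗ H(τ) B(y,τ) J(y,τ)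 π(y,τ) dτ. -/
open Set MeasureTheory

/-- (Integral identity (N3), Section 2.) If `H > 0` with `H(0) = 1`
satisfies `(J/J₀) H B = exp((1/μ)∫₀ᵗ π dτ)`, then
`J H B = J₀ + (1/μ) ∫₀ᵗ H B J π dτ`, where
`B(y,t) = exp((1/μ) ∫₀ʸ ρ₀ (v₀ - v(·,t)) dξ)`. -/
theorem integral_identity_N3
    (L T μ γ : ℝ) (hL : 0 < L) (hT : 0 < T) (hμ : 0 < μ) (hγ : 1 < γ)
    (ρ₀ : ℝ → ℝ) (hρ₀ : ContinuousOn ρ₀ (Icc 0 L))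
    (J v π Jt vy vt w πy πt Jy Jyt : ℝ → ℝ → ℝ)
    (hsol : ClassicalSolution L T μ γ ρ₀ J v π Jt vy vt w πy πt)
    (hbc : ∀ t ∈ Icc (0:ℝ) T, v 0 t = 0 ∧ v L t = 0)
    (hJy : ∀ y ∈ Icc (0:ℝ) L, ∀ t ∈ Icc (0:ℝ) T,
      HasDerivWithinAt (fun x => J x t) (Jy y t) (Icc 0 L) y)
    (hJyt : ∀ y ∈ Icc (0:ℝ) L, ∀ t ∈ Icc (0:ℝ) T,
      HasDerivWithinAt (fun s => Jy y s) (Jyt y t) (Icc 0 T) t)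
    (hJytcont : ContinuousOn (fun p : ℝ × ℝ => Jyt p.1 p.2) (Icc 0 L ×ˢ Icc 0 T))
    (H : ℝ → ℝ) (hHpos : ∀ t ∈ Icc (0:ℝ) T, 0 < H t) (hH0 : H 0 = 1)
    (hN1 : ∀ y ∈ Icc (0:ℝ) L, ∀ t ∈ Icc (0:ℝ) T,
      (J y t / J y 0) * H t
          * Real.exp ((1 / μ) * ∫ ξ in (0:ℝ)..y, ρ₀ ξ * (v ξ 0 - v ξ t))
        = Real.exp ((1 / μ) * ∫ τ in (0:ℝ)..t, π y τ)) :
    ∀ y ∈ Icc (0:ℝ) L, ∀ t ∈ Icc (0:ℝ) T,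
      J y t * H t * Real.exp ((1 / μ) * ∫ ξ in (0:ℝ)..y, ρ₀ ξ * (v ξ 0 - v ξ t))
        = J y 0 + (1 / μ) * ∫ τ in (0:ℝ)..t,
            H τ * Real.exp ((1 / μ) * ∫ ξ in (0:ℝ)..y, ρ₀ ξ * (v ξ 0 - v ξ τ))
              * J y τ * π y τ := by
  intro y hy t ht
  have h0T : (0:ℝ) ∈ Icc (0:ℝ) T := ⟨le_rfl, hT.le⟩
  have hJ0 : 0 < J y 0 := hsol.Jpos y hy 0 h0T
  have hpc : ContinuousOn (fun s => π y s) (Icc 0 T) :=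
    hsol.contPi.comp (f := fun s => (y, s)) (by fun_prop) (fun s hs => ⟨hy, hs⟩)
  obtain ⟨p, hp, hpe⟩ : ∃ p : ℝ → ℝ, Continuous p ∧ ∀ s ∈ Icc (0:ℝ) T, p s = π y s := by
    refine ⟨IccExtend hT.le ((Icc 0 T).domRestrict (fun s => π y s)),
      (continuousOn_iff_continuous_domRestrict.mp hpc).Icc_extend', fun s hs => ?_⟩
    rw [IccExtend_of_mem _ _ hs]
    rfl
  have hint : ∀ s ∈ Icc (0:ℝ) T, (∫ τ in (0:ℝ)..s, π y τ) = ∫ τ in (0:ℝ)..s, p τ := by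
    intro s hs
    apply intervalIntegral.integral_congr
    intro x hx
    rw [uIcc_of_le hs.1] at hx
    exact (hpe x ⟨hx.1, hx.2.trans hs.2⟩).symm
  have key : ∀ s ∈ Icc (0:ℝ) T,
      J y s * H s * Real.exp ((1 / μ) * ∫ ξ in (0:ℝ)..y, ρ₀ ξ * (v ξ 0 - v ξ s))
        = J y 0 * Real.exp ((1 / μ) * ∫ τ in (0:ℝ)..s, p τ) := by
    intro s hs
    rw [← hint s hs, ← hN1 y hy s hs]
    field_simp
  have hd : ∀ s : ℝ, HasDerivAt (fun s => μ * Real.exp ((1 / μ) * ∫ τ in (0:ℝ)..s, p τ))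
      (Real.exp ((1 / μ) * ∫ τ in (0:ℝ)..s, p τ) * p s) s := by
    intro s
    have h1 := (((hp.integral_hasStrictDerivAt 0 s).hasDerivAt.const_mul (1 / μ)).exp).const_mul μ
    have h2 : ∀ E q : ℝ, μ * (E * (1 / μ * q)) = E * q := by
      intro E q
      field_simp
    rw [h2] at h1
    exact h1
  have hPc : Continuous (fun s => ∫ τ in (0:ℝ)..s, p τ) :=
    continuous_iff_continuousAt.mpr fun s => (hp.integral_hasStrictDerivAt 0 s).hasDerivAt.continuousAt
  have hftc : (∫ s in (0:ℝ)..t, Real.exp ((1 / μ) * ∫ τ in (0:ℝ)..s, p τ) * p s)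
      = μ * Real.exp ((1 / μ) * ∫ τ in (0:ℝ)..t, p τ) - μ := by
    rw [intervalIntegral.integral_eq_sub_of_hasDerivAt (fun s _ => hd s)
      (Continuous.intervalIntegrable (by fun_prop) _ _)]
    simp
  have hR : (∫ τ in (0:ℝ)..t,
            H τ * Real.exp ((1 / μ) * ∫ ξ in (0:ℝ)..y, ρ₀ ξ * (v ξ 0 - v ξ τ))
              * J y τ * π y τ)
      = ∫ s in (0:ℝ)..t, J y 0 * (Real.exp ((1 / μ) * ∫ τ in (0:ℝ)..s, p τ) * p s) := by
    apply intervalIntegral.integral_congr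
    intro x hx
    rw [uIcc_of_le ht.1] at hx
    have hx' : x ∈ Icc (0:ℝ) T := ⟨hx.1, hx.2.trans ht.2⟩
    have hk := key x hx'
    have hpx := hpe x hx'
    simp only
    rw [← mul_assoc, ← hk, hpx]
    ring
  rw [hR, intervalIntegral.integral_const_mul, hftc, key t ht]
  field_simp
  ring
end

section
/- Let (J, v, π) be a classical solution of (E1)–(E3) on [0,L]×[0,T] with boundary condition v(0,t) = v(L,t) = 0, and assume ρ₀ ≥ 0 and π ≥ 0 on [0,L]×[0,T]. Set m₀ := ∫₀ᴸ ρ₀ dy and E₀ := ∫₀ᴸ ( ρ₀ v₀²/2 + J₀ π₀/(γ−1) ) dy. Then for all (y,t) ∈ [0,L]×[0,T]: | ∫₀^y ρ₀(ξ)( v(ξ,t) − v₀(ξ) ) dξ | ≤ 2 √(2 m₀ E₀); consequently, with B(y,t) := exp( (1/μ) ∫₀^y ρ₀ ( v₀ − v(·,t) ) dξ ), one has e^{−(2/μ)√(2 m₀ E₀)} ≤ B(y,t) ≤ e^{(2/μ)√(2 m₀ E₀)}. -/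
open Set MeasureTheory

lemma aux_cs (L : ℝ) (hL : 0 ≤ L) (ρ f : ℝ → ℝ) (hρ : ContinuousOn ρ (Icc 0 L))
    (hf : ContinuousOn f (Icc 0 L)) (hn : ∀ y ∈ Icc (0:ℝ) L, 0 ≤ ρ y) :
    (∫ y in (0:ℝ)..L, ρ y * |f y|) ^ 2
      ≤ (∫ y in (0:ℝ)..L, ρ y) * ∫ y in (0:ℝ)..L, ρ y * f y ^ 2 := by
  have i1 : IntervalIntegrable ρ volume 0 L := hρ.intervalIntegrable_of_Icc hL
  have i2 : IntervalIntegrable (fun y => ρ y * |f y|) volume 0 L :=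
    (hρ.mul hf.abs).intervalIntegrable_of_Icc hL
  have i3 : IntervalIntegrable (fun y => ρ y * f y ^ 2) volume 0 L :=
    (hρ.mul (hf.pow 2)).intervalIntegrable_of_Icc hL
  have key : ∀ s : ℝ, 0 ≤ (∫ y in (0:ℝ)..L, ρ y) * (s * s)
      + (-2 * ∫ y in (0:ℝ)..L, ρ y * |f y|) * s + ∫ y in (0:ℝ)..L, ρ y * f y ^ 2 := by
    intro s
    have h0 : 0 ≤ ∫ y in (0:ℝ)..L, ((s * s) * ρ y + (-2 * s) * (ρ y * |f y|) + ρ y * f y ^ 2) := by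
      apply intervalIntegral.integral_nonneg hL
      intro y hy
      have := mul_nonneg (hn y hy) (sq_nonneg (s - |f y|))
      have h2 := sq_abs (f y)
      rw [← h2]
      nlinarith
    rw [intervalIntegral.integral_add ((i1.const_mul _).add (i2.const_mul _)) i3,
      intervalIntegral.integral_add (i1.const_mul _) (i2.const_mul _),
      intervalIntegral.integral_const_mul, intervalIntegral.integral_const_mul] at h0
    linarith
  have := discrim_le_zero key
  unfold discrim at this
  nlinarith

lemma aux_slice_y {L T : ℝ} {F : ℝ → ℝ → ℝ}
    (hF : ContinuousOn (fun p : ℝ × ℝ => F p.1 p.2) (Icc 0 L ×ˢ Icc 0 T))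
    {t : ℝ} (ht : t ∈ Icc (0:ℝ) T) : ContinuousOn (fun y => F y t) (Icc 0 L) :=
  hF.comp (f := fun y : ℝ => (y, t)) (by fun_prop) (fun _ hy => ⟨hy, ht⟩)

lemma aux_slice_t {L T : ℝ} {F : ℝ → ℝ → ℝ}
    (hF : ContinuousOn (fun p : ℝ × ℝ => F p.1 p.2) (Icc 0 L ×ˢ Icc 0 T))
    {y : ℝ} (hy : y ∈ Icc (0:ℝ) L) : ContinuousOn (fun t => F y t) (Icc 0 T) :=
  hF.comp (f := fun t : ℝ => (y, t)) (by fun_prop) (fun _ ht => ⟨hy, ht⟩)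

lemma aux_swap {L T : ℝ} (hL : 0 ≤ L) {F : ℝ → ℝ → ℝ}
    (hF : ContinuousOn (fun p : ℝ × ℝ => F p.1 p.2) (Icc 0 L ×ˢ Icc 0 T))
    {t : ℝ} (ht : t ∈ Icc (0:ℝ) T) :
    ∫ y in (0:ℝ)..L, ∫ s in (0:ℝ)..t, F y s = ∫ s in (0:ℝ)..t, ∫ y in (0:ℝ)..L, F y s := by
  simp_rw [intervalIntegral.integral_of_le ht.1]
  apply intervalIntegral_integral_swap
  rw [uIoc_of_le hL, Measure.prod_restrict, ← IntegrableOn]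
  exact (hF.integrableOn_compact (isCompact_Icc.prod isCompact_Icc)).mono_set
    (prod_mono Ioc_subset_Icc_self (Ioc_subset_Icc_self.trans (Icc_subset_Icc_right ht.2)))

lemma aux_energy
    (L T μ γ : ℝ) (hL : 0 < L) (hγ : 1 < γ)
    (ρ₀ : ℝ → ℝ) (hρ₀ : ContinuousOn ρ₀ (Icc 0 L))
    (J v π Jt vy vt w πy πt : ℝ → ℝ → ℝ)
    (hsol : ClassicalSolution L T μ γ ρ₀ J v π Jt vy vt w πy πt)
    (hbc : ∀ t ∈ Icc (0:ℝ) T, v 0 t = 0 ∧ v L t = 0)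
    (t : ℝ) (ht : t ∈ Icc (0:ℝ) T) :
    ∫ y in (0:ℝ)..L, (ρ₀ y * (v y t) ^ 2 / 2 + J y t * π y t / (γ - 1))
     = ∫ y in (0:ℝ)..L, (ρ₀ y * (v y 0) ^ 2 / 2 + J y 0 * π y 0 / (γ - 1)) := by
  have hγ' : γ - 1 ≠ 0 := by linarith
  have hT : (0:ℝ) ≤ T := ht.1.trans ht.2
  have h0 : (0:ℝ) ∈ Icc (0:ℝ) T := ⟨le_rfl, hT⟩
  have hJ0 : ∀ p ∈ Icc (0:ℝ) L ×ˢ Icc (0:ℝ) T, J p.1 p.2 ≠ 0 :=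
    fun p hp => (hsol.Jpos p.1 hp.1 p.2 hp.2).ne'
  let F : ℝ → ℝ → ℝ := fun y s =>
    vy y s * (μ * (vy y s / J y s) - π y s) + v y s * (μ * w y s - πy y s)
  let e : ℝ → ℝ → ℝ := fun y s => ρ₀ y * (v y s) ^ 2 / 2 + J y s * π y s / (γ - 1)
  have hF : ContinuousOn (fun p : ℝ × ℝ => F p.1 p.2) (Icc 0 L ×ˢ Icc 0 T) :=
    (hsol.contvy.mul ((continuousOn_const.mul (hsol.contvy.div hsol.contJ hJ0)).sub
      hsol.contPi)).add (hsol.contv.mul ((continuousOn_const.mul hsol.contw).sub hsol.contPiy))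
  have hρc : ContinuousOn (fun p : ℝ × ℝ => ρ₀ p.1) (Icc 0 L ×ˢ Icc 0 T) :=
    hρ₀.comp continuousOn_fst (fun p hp => hp.1)
  have he : ContinuousOn (fun p : ℝ × ℝ => e p.1 p.2) (Icc 0 L ×ˢ Icc 0 T) :=
    ((hρc.mul (hsol.contv.pow 2)).div_const 2).add
      ((hsol.contJ.mul hsol.contPi).div_const (γ - 1))
  have step1 : ∀ y ∈ Icc (0:ℝ) L, ∫ s in (0:ℝ)..t, F y s = e y t - e y 0 := by
    intro y hy
    refine intervalIntegral.integral_eq_sub_of_hasDerivAt_of_le ht.1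
      ((aux_slice_t he hy).mono (Icc_subset_Icc_right ht.2)) ?_
      (((aux_slice_t hF hy).mono (Icc_subset_Icc_right ht.2)).intervalIntegrable_of_Icc ht.1)
    intro s hs
    have hs' : s ∈ Icc (0:ℝ) T := ⟨hs.1.le, hs.2.le.trans ht.2⟩
    have hn : Icc (0:ℝ) T ∈ nhds s := Icc_mem_nhds hs.1 (hs.2.trans_le ht.2)
    have dv := (hsol.hvt y hy s hs').hasDerivAt hn
    have dJ := (hsol.hJt y hy s hs').hasDerivAt hn
    have dP := (hsol.hPit y hy s hs').hasDerivAt hn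
    have d := (((dv.pow 2).const_mul (ρ₀ y)).div_const 2).add ((dJ.mul dP).div_const (γ - 1))
    refine d.congr_deriv ?_
    have e1 := hsol.eq1 y hy s hs'
    have e2 := hsol.eq2 y hy s hs'
    have e3 := hsol.eq3 y hy s hs'
    have hJ : J y s ≠ 0 := (hsol.Jpos y hy s hs').ne'
    have hq : vy y s = (vy y s / J y s) * J y s := by field_simp
    simp only [F]
    rw [e1]
    generalize vy y s / J y s = q at *
    have e2' : ρ₀ y * vt y s = μ * w y s - πy y s := by linarith
    have e3' : πt y s = μ * (γ - 1) * q ^ 2 - γ * q * π y s := by linarith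
    rw [← e2', e3', hq]
    field_simp
    ring
  have step2 : ∀ s ∈ Icc (0:ℝ) T, ∫ y in (0:ℝ)..L, F y s = 0 := by
    intro s hs
    have hG : ContinuousOn (fun p : ℝ × ℝ => (fun y s => v y s * (μ * (vy y s / J y s) - π y s))
        p.1 p.2) (Icc 0 L ×ˢ Icc 0 T) :=
      hsol.contv.mul ((continuousOn_const.mul (hsol.contvy.div hsol.contJ hJ0)).sub hsol.contPi)
    have := intervalIntegral.integral_eq_sub_of_hasDerivAt_of_le hL.le
      (aux_slice_y (F := fun y s => v y s * (μ * (vy y s / J y s) - π y s)) hG hs) (f' := fun y => F y s) ?_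
      ((aux_slice_y hF hs).intervalIntegrable_of_Icc hL.le)
    · rw [this]
      simp [(hbc s hs).1, (hbc s hs).2]
    intro y hy
    have hy' : y ∈ Icc (0:ℝ) L := Ioo_subset_Icc_self hy
    have hn : Icc (0:ℝ) L ∈ nhds y := Icc_mem_nhds hy.1 hy.2
    exact ((hsol.hvy y hy' s hs).hasDerivAt hn).mul
      ((((hsol.hw y hy' s hs).hasDerivAt hn).const_mul μ).sub ((hsol.hPiy y hy' s hs).hasDerivAt hn))
  have sw := aux_swap hL.le hF ht
  have l : ∫ y in (0:ℝ)..L, ∫ s in (0:ℝ)..t, F y s = ∫ y in (0:ℝ)..L, (e y t - e y 0) := by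
    apply intervalIntegral.integral_congr
    intro y hy
    rw [uIcc_of_le hL.le] at hy
    exact step1 y hy
  have r : ∫ s in (0:ℝ)..t, ∫ y in (0:ℝ)..L, F y s = ∫ s in (0:ℝ)..t, (0:ℝ) := by
    apply intervalIntegral.integral_congr
    intro s hs
    rw [uIcc_of_le ht.1] at hs
    exact step2 s ⟨hs.1, hs.2.trans ht.2⟩
  rw [l, r, intervalIntegral.integral_zero, intervalIntegral.integral_sub
    ((aux_slice_y he ht).intervalIntegrable_of_Icc hL.le)
    ((aux_slice_y he h0).intervalIntegrable_of_Icc hL.le)] at sw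
  exact sub_eq_zero.mp sw

/-- (Estimate (EstB) in the proof of Proposition 2.3.) For a classical
solution with `ρ₀ ≥ 0` and `π ≥ 0`, setting `m₀ = ∫₀ᴸ ρ₀` and
`E₀ = ∫₀ᴸ (ρ₀ v₀²/2 + J₀π₀/(γ-1))`, one has
`|∫₀ʸ ρ₀ (v - v₀) dξ| ≤ 2√(2 m₀ E₀)`, and hence the two-sided bound on
`B = exp((1/μ)∫₀ʸ ρ₀ (v₀ - v(·,t)) dξ)`. -/
theorem estimate_B
    (L T μ γ : ℝ) (hL : 0 < L) (hT : 0 < T) (hμ : 0 < μ) (hγ : 1 < γ)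
    (ρ₀ : ℝ → ℝ) (hρ₀ : ContinuousOn ρ₀ (Icc 0 L))
    (hρ₀nonneg : ∀ y ∈ Icc (0:ℝ) L, 0 ≤ ρ₀ y)
    (J v π Jt vy vt w πy πt : ℝ → ℝ → ℝ)
    (hsol : ClassicalSolution L T μ γ ρ₀ J v π Jt vy vt w πy πt)
    (hbc : ∀ t ∈ Icc (0:ℝ) T, v 0 t = 0 ∧ v L t = 0)
    (hπnonneg : ∀ y ∈ Icc (0:ℝ) L, ∀ t ∈ Icc (0:ℝ) T, 0 ≤ π y t)
    (m₀ E₀ : ℝ)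
    (hm₀ : m₀ = ∫ y in (0:ℝ)..L, ρ₀ y)
    (hE₀ : E₀ = ∫ y in (0:ℝ)..L, (ρ₀ y * (v y 0) ^ 2 / 2 + J y 0 * π y 0 / (γ - 1))) :
    ∀ y ∈ Icc (0:ℝ) L, ∀ t ∈ Icc (0:ℝ) T,
      |∫ ξ in (0:ℝ)..y, ρ₀ ξ * (v ξ t - v ξ 0)| ≤ 2 * Real.sqrt (2 * m₀ * E₀) ∧
      Real.exp (-(2 / μ) * Real.sqrt (2 * m₀ * E₀))
          ≤ Real.exp ((1 / μ) * ∫ ξ in (0:ℝ)..y, ρ₀ ξ * (v ξ 0 - v ξ t)) ∧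
      Real.exp ((1 / μ) * ∫ ξ in (0:ℝ)..y, ρ₀ ξ * (v ξ 0 - v ξ t))
          ≤ Real.exp ((2 / μ) * Real.sqrt (2 * m₀ * E₀)) := by
  have hm0 : 0 ≤ m₀ := hm₀ ▸ intervalIntegral.integral_nonneg hL.le hρ₀nonneg
  have bound : ∀ t ∈ Icc (0:ℝ) T, ∫ y in (0:ℝ)..L, ρ₀ y * |v y t| ≤ Real.sqrt (2 * m₀ * E₀) := by
    intro t ht
    have cv := aux_slice_y hsol.contv ht
    have cs := aux_cs L hL.le ρ₀ (fun y => v y t) hρ₀ cv hρ₀nonneg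
    rw [← hm₀] at cs
    have en := aux_energy L T μ γ hL hγ ρ₀ hρ₀ J v π Jt vy vt w πy πt hsol hbc t ht
    rw [← hE₀] at en
    have hle : ∫ y in (0:ℝ)..L, ρ₀ y * v y t ^ 2 ≤ 2 * E₀ := by
      rw [← en, ← intervalIntegral.integral_const_mul]
      apply intervalIntegral.integral_mono_on hL.le
      · exact (hρ₀.mul (cv.pow 2)).intervalIntegrable_of_Icc hL.le
      · exact (continuousOn_const.mul (((hρ₀.mul (cv.pow 2)).div_const 2).add
          (((aux_slice_y hsol.contJ ht).mul (aux_slice_y hsol.contPi ht)).div_const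
            (γ - 1)))).intervalIntegrable_of_Icc hL.le
      · intro y hy
        have : 0 ≤ J y t * π y t / (γ - 1) :=
          div_nonneg (mul_nonneg (hsol.Jpos y hy t ht).le (hπnonneg y hy t ht)) (by linarith)
        linarith
    apply Real.le_sqrt_of_sq_le
    have := mul_le_mul_of_nonneg_left hle hm0
    linarith
  intro y hy t ht
  have h0 : (0:ℝ) ∈ Icc (0:ℝ) T := ⟨le_rfl, hT.le⟩
  have ct := aux_slice_y hsol.contv ht
  have c0 := aux_slice_y hsol.contv h0
  have main : |∫ ξ in (0:ℝ)..y, ρ₀ ξ * (v ξ t - v ξ 0)| ≤ 2 * Real.sqrt (2 * m₀ * E₀) := by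
    have it : IntervalIntegrable (fun ξ => ρ₀ ξ * |v ξ t|) volume 0 L :=
      (hρ₀.mul ct.abs).intervalIntegrable_of_Icc hL.le
    have i0 : IntervalIntegrable (fun ξ => ρ₀ ξ * |v ξ 0|) volume 0 L :=
      (hρ₀.mul c0.abs).intervalIntegrable_of_Icc hL.le
    have id : ContinuousOn (fun ξ => |ρ₀ ξ * (v ξ t - v ξ 0)|) (Icc 0 L) :=
      (hρ₀.mul (ct.sub c0)).abs
    calc |∫ ξ in (0:ℝ)..y, ρ₀ ξ * (v ξ t - v ξ 0)|
        ≤ ∫ ξ in (0:ℝ)..y, |ρ₀ ξ * (v ξ t - v ξ 0)| :=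
          intervalIntegral.abs_integral_le_integral_abs hy.1
      _ ≤ ∫ ξ in (0:ℝ)..L, |ρ₀ ξ * (v ξ t - v ξ 0)| :=
          intervalIntegral.integral_mono_interval le_rfl hy.1 hy.2
            (Filter.Eventually.of_forall fun _ => abs_nonneg _)
            (id.intervalIntegrable_of_Icc hL.le)
      _ ≤ ∫ ξ in (0:ℝ)..L, (ρ₀ ξ * |v ξ t| + ρ₀ ξ * |v ξ 0|) := by
          apply intervalIntegral.integral_mono_on hL.le (id.intervalIntegrable_of_Icc hL.le)
            (it.add i0)
          intro ξ hξ
          rw [abs_mul, abs_of_nonneg (hρ₀nonneg ξ hξ), ← mul_add]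
          exact mul_le_mul_of_nonneg_left (abs_sub _ _) (hρ₀nonneg ξ hξ)
      _ = (∫ ξ in (0:ℝ)..L, ρ₀ ξ * |v ξ t|) + ∫ ξ in (0:ℝ)..L, ρ₀ ξ * |v ξ 0| :=
          intervalIntegral.integral_add it i0
      _ ≤ 2 * Real.sqrt (2 * m₀ * E₀) := by linarith [bound t ht, bound 0 h0]
  have hneg : ∫ ξ in (0:ℝ)..y, ρ₀ ξ * (v ξ 0 - v ξ t)
      = -∫ ξ in (0:ℝ)..y, ρ₀ ξ * (v ξ t - v ξ 0) := by
    rw [← intervalIntegral.integral_neg]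
    congr 1
    ext ξ
    ring
  have hab := abs_le.mp main
  have hμ' : 0 ≤ 1 / μ := by positivity
  refine ⟨main, Real.exp_le_exp.mpr ?_, Real.exp_le_exp.mpr ?_⟩
  · rw [hneg]
    have := mul_le_mul_of_nonneg_left hab.2 hμ'
    have e : 2 / μ = 1 / μ * 2 := by ring
    rw [e]
    linarith
  · rw [hneg]
    have := mul_le_mul_of_nonneg_left hab.1 hμ'
    have e : 2 / μ = 1 / μ * 2 := by ring
    rw [e]
    linarith
end

section
/- Let (J, v, π) be a classical solution of (E1)–(E3) on [0,L]×[0,T] with boundary condition v(0,t) = v(L,t) = 0, such that ∂_y J exists with ∂_t ∂_y J continuous, ρ₀ ≥ 0 on [0,L], π ≥ 0 on [0,L]×[0,T], and J₀(y) ≥ J̲ for all y ∈ [0,L] for some constant J̲ > 0. Set m₀ := ∫₀ᴸ ρ₀ dy, ℓ₀ := ∫₀ᴸ J₀ dy, and E₀ := ∫₀ᴸ ( ρ₀ v₀²/2 + J₀ π₀/(γ−1) ) dy. Then for all (y,t) ∈ [0,L]×[0,T]: J(y,t) ≥ J̲ exp{ −(4/μ)√(2 m₀ E₀) − ((γ−1)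 E₀/(μ ℓ₀)) e^{(4/μ)√(2 m₀ E₀)} t }. -/
open Set MeasureTheory

namespace LBJ

abbrev CO (L T : ℝ) (F : ℝ → ℝ → ℝ) : Prop :=
  ContinuousOn (fun p : ℝ × ℝ => F p.1 p.2) (Icc 0 L ×ˢ Icc 0 T)

lemma CO.slice {L T : ℝ} {F : ℝ → ℝ → ℝ} (h : CO L T F) {t : ℝ} (ht : t ∈ Icc 0 T) :
    ContinuousOn (fun y => F y t) (Icc 0 L) := by
  have : ContinuousOn (fun y : ℝ => ((y, t) : ℝ × ℝ)) (Icc 0 L) := by fun_prop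
  exact ContinuousOn.comp (g := fun p : ℝ × ℝ => F p.1 p.2) h this
    (fun y hy => ⟨hy, ht⟩)

lemma CO.slice' {L T : ℝ} {F : ℝ → ℝ → ℝ} (h : CO L T F) {y : ℝ} (hy : y ∈ Icc 0 L) :
    ContinuousOn (fun t => F y t) (Icc 0 T) := by
  have : ContinuousOn (fun t : ℝ => ((y, t) : ℝ × ℝ)) (Icc 0 T) := by fun_prop
  exact ContinuousOn.comp (g := fun p : ℝ × ℝ => F p.1 p.2) h this
    (fun t ht => ⟨hy, ht⟩)

lemma ii {f : ℝ → ℝ} {L y : ℝ} (h : ContinuousOn f (Icc 0 L)) (hy : y ∈ Icc 0 L) :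
    IntervalIntegrable f volume 0 y := by
  apply ContinuousOn.intervalIntegrable
  rw [uIcc_of_le hy.1]
  exact h.mono (Icc_subset_Icc_right hy.2)

lemma ext {L T : ℝ} (hL : 0 ≤ L) (hT : 0 ≤ T) {F : ℝ → ℝ → ℝ} (h : CO L T F) :
    ∃ G : ℝ → ℝ → ℝ, Continuous (fun p : ℝ × ℝ => G p.1 p.2) ∧
      ∀ y ∈ Icc 0 L, ∀ t ∈ Icc 0 T, G y t = F y t := by
  refine ⟨fun y t => F (projIcc 0 L hL y) (projIcc 0 T hT t), ?_, ?_⟩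
  · have : Continuous (fun p : ℝ × ℝ =>
      (((projIcc 0 L hL p.1 : ℝ), (projIcc 0 T hT p.2 : ℝ)) : ℝ × ℝ)) := by
      have h1 : Continuous (projIcc 0 L hL) := continuous_projIcc
      have h2 : Continuous (projIcc 0 T hT) := continuous_projIcc
      fun_prop
    exact h.comp_continuous this (fun p => ⟨(projIcc 0 L hL p.1).2, (projIcc 0 T hT p.2).2⟩)
  · intro y hy t ht
    simp only [projIcc_of_mem _ hy, projIcc_of_mem _ ht]

lemma contPrim {L T : ℝ} (hL : 0 ≤ L) (hT : 0 ≤ T) {F : ℝ → ℝ → ℝ} (h : CO L T F) :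
    CO L T (fun y t => ∫ x in (0:ℝ)..y, F x t) := by
  obtain ⟨G, hG, hGF⟩ := ext hL hT h
  have h1 : Continuous (fun p : ℝ × ℝ => ∫ x in (0:ℝ)..p.1, G x p.2) := by
    apply intervalIntegral.continuous_parametric_intervalIntegral_of_continuous
      (f := fun (p : ℝ × ℝ) x => G x p.2)
    · exact hG.comp (g := fun p : ℝ × ℝ => G p.1 p.2)
        (f := fun q : (ℝ × ℝ) × ℝ => (q.2, q.1.2)) (by fun_prop)
    · fun_prop
  refine h1.continuousOn.congr ?_
  rintro ⟨y, t⟩ ⟨hy, ht⟩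
  apply intervalIntegral.integral_congr
  intro x hx
  simp only at hy ht
  rw [uIcc_of_le hy.1] at hx
  exact (hGF x ⟨hx.1, hx.2.trans hy.2⟩ t ht).symm

lemma derivPrim {L T : ℝ} {F f : ℝ → ℝ → ℝ} (hF : CO L T F) (hf : CO L T f)
    (hd : ∀ y ∈ Icc 0 L, ∀ t ∈ Ioo 0 T, HasDerivAt (fun s => F y s) (f y t) t)
    {y : ℝ} (hy : y ∈ Icc 0 L) {t : ℝ} (ht : t ∈ Ioo 0 T) :
    HasDerivAt (fun s => ∫ x in (0:ℝ)..y, F x s) (∫ x in (0:ℝ)..y, f x t) t := by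
  obtain ⟨C, hC⟩ := (isCompact_Icc.prod isCompact_Icc).exists_bound_of_continuousOn hf
  have hnh : Ioo 0 T ∈ nhds t := isOpen_Ioo.mem_nhds ht
  have hsub : ∀ x ∈ uIoc 0 y, x ∈ Icc 0 L := by
    intro x hx
    rw [uIoc_of_le hy.1] at hx
    exact ⟨hx.1.le, hx.2.trans hy.2⟩
  refine (intervalIntegral.hasDerivAt_integral_of_dominated_loc_of_deriv_le
    (F := fun s x => F x s) (F' := fun s x => f x s) (bound := fun _ => C) hnh ?_ ?_ ?_ ?_ ?_ ?_).2
  · filter_upwards [hnh] with s hs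
    exact (intervalIntegrable_iff.1 (ii (hF.slice ⟨hs.1.le, hs.2.le⟩) hy)).aestronglyMeasurable
  · exact ii (hF.slice ⟨ht.1.le, ht.2.le⟩) hy
  · exact (intervalIntegrable_iff.1 (ii (hf.slice ⟨ht.1.le, ht.2.le⟩) hy)).aestronglyMeasurable
  · refine Filter.Eventually.of_forall ?_
    intro x hx s hs
    exact hC (x, s) ⟨hsub x hx, hs.1.le, hs.2.le⟩
  · exact intervalIntegrable_const
  · refine Filter.Eventually.of_forall ?_
    intro x hx s hs
    exact hd x (hsub x hx) s hs

lemma le_of_deriv {T : ℝ} {f f' : ℝ → ℝ} (hc : ContinuousOn f (Icc 0 T))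
    (hd : ∀ t ∈ Ioo 0 T, HasDerivAt f (f' t) t) (h0 : ∀ t ∈ Ioo 0 T, 0 ≤ f' t)
    {t : ℝ} (ht : t ∈ Icc 0 T) : f 0 ≤ f t := by
  refine monotoneOn_of_deriv_nonneg (convex_Icc 0 T) hc ?_ ?_ ⟨le_rfl, ht.1.trans ht.2⟩ ht ht.1
  · rw [interior_Icc]
    exact fun s hs => (hd s hs).differentiableAt.differentiableWithinAt
  · rw [interior_Icc]
    intro s hs
    rw [(hd s hs).deriv]
    exact h0 s hs

lemma eq_of_deriv {T : ℝ} {f f' : ℝ → ℝ} (hc : ContinuousOn f (Icc 0 T))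
    (hd : ∀ t ∈ Ioo 0 T, HasDerivAt f (f' t) t) (h0 : ∀ t ∈ Ioo 0 T, f' t = 0)
    {t : ℝ} (ht : t ∈ Icc 0 T) : f t = f 0 := by
  refine le_antisymm ?_ (le_of_deriv hc hd (fun s hs => (h0 s hs).ge) ht)
  have := le_of_deriv hc.neg (fun s hs => (hd s hs).neg) (fun s hs => by simp [h0 s hs]) ht
  simpa using this

lemma gron {T C : ℝ} {f f' : ℝ → ℝ} (hc : ContinuousOn f (Icc 0 T))
    (hd : ∀ t ∈ Ioo 0 T, HasDerivAt f (f' t) t) (h0 : ∀ t ∈ Ioo 0 T, f' t ≤ C * f t)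
    {t : ℝ} (ht : t ∈ Icc 0 T) : f t ≤ f 0 * Real.exp (C * t) := by
  have h := le_of_deriv (f := fun s => - (f s * Real.exp (-(C * s))))
    (f' := fun s => - (f' s * Real.exp (-(C * s)) + f s * (Real.exp (-(C * s)) * (-(C * 1)))))
    (by fun_prop)
    (fun s hs => by
      have h2 : HasDerivAt (fun s => Real.exp (-(C * s))) (Real.exp (-(C * s)) * (-(C * 1))) s :=
        (((hasDerivAt_id s).const_mul C).neg).exp
      exact ((hd s hs).mul h2).neg)
    (fun s hs => by
      have := mul_nonneg (Real.exp_pos (-(C * s))).le (sub_nonneg.2 (h0 s hs))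
      nlinarith) ht
  simp only [mul_zero, neg_zero, Real.exp_zero, mul_one] at h
  have h3 : f t * Real.exp (-(C * t)) ≤ f 0 := by linarith
  calc f t = f t * Real.exp (-(C * t)) * Real.exp (C * t) := by
        rw [mul_assoc, ← Real.exp_add]; simp
    _ ≤ _ := by gcongr

/-- Cauchy-Schwarz in weighted form. -/
lemma cs {L B : ℝ} (hL : 0 ≤ L) {r u : ℝ → ℝ} (hr : ContinuousOn r (Icc 0 L))
    (hu : ContinuousOn u (Icc 0 L)) (h0 : ∀ y ∈ Icc 0 L, 0 ≤ r y)
    (hB : ∫ y in (0:ℝ)..L, r y * u y ^ 2 ≤ B) {y : ℝ} (hy : y ∈ Icc 0 L) :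
    |∫ x in (0:ℝ)..y, r x * u x| ≤ Real.sqrt ((∫ y in (0:ℝ)..L, r y) * B) := by
  have hLL : L ∈ Icc 0 L := ⟨hL, le_rfl⟩
  have hru : ContinuousOn (fun x => r x * |u x|) (Icc 0 L) := hr.mul hu.abs
  have hru2 : ContinuousOn (fun x => r x * u x ^ 2) (Icc 0 L) := hr.mul (hu.pow 2)
  have hm : 0 ≤ ∫ y in (0:ℝ)..L, r y := intervalIntegral.integral_nonneg hL h0
  have h1 : |∫ x in (0:ℝ)..y, r x * u x| ≤ ∫ x in (0:ℝ)..L, r x * |u x| := by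
    calc |∫ x in (0:ℝ)..y, r x * u x| ≤ ∫ x in (0:ℝ)..y, |r x * u x| :=
          intervalIntegral.abs_integral_le_integral_abs hy.1
      _ = ∫ x in (0:ℝ)..y, r x * |u x| := by
          apply intervalIntegral.integral_congr
          intro x hx
          rw [uIcc_of_le hy.1] at hx
          simp only [abs_mul, abs_of_nonneg (h0 x ⟨hx.1, hx.2.trans hy.2⟩)]
      _ ≤ _ := by
          apply intervalIntegral.integral_mono_interval le_rfl hy.1 hy.2 _ (ii hru hLL)
          refine (ae_restrict_iff' measurableSet_Ioc).2 (Filter.Eventually.of_forall ?_)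
          intro x hx
          exact mul_nonneg (h0 x ⟨hx.1.le, hx.2⟩) (abs_nonneg _)
  have h2 : discrim (∫ y in (0:ℝ)..L, r y) (-2 * ∫ x in (0:ℝ)..L, r x * |u x|)
      (∫ y in (0:ℝ)..L, r y * u y ^ 2) ≤ 0 := by
    apply discrim_le_zero
    intro a
    have h3 : 0 ≤ ∫ x in (0:ℝ)..L, ((r x * (a * a) - r x * |u x| * (2 * a)) + r x * u x ^ 2) := by
      apply intervalIntegral.integral_nonneg hL
      intro x hx
      have := mul_nonneg (h0 x hx) (sq_nonneg (a - |u x|))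
      rw [sub_sq, sq_abs] at this
      linarith
    rw [intervalIntegral.integral_add (((ii hr hLL).mul_const _).sub ((ii hru hLL).mul_const _))
      (ii hru2 hLL), intervalIntegral.integral_sub ((ii hr hLL).mul_const _)
      ((ii hru hLL).mul_const _), intervalIntegral.integral_mul_const,
      intervalIntegral.integral_mul_const] at h3
    linarith
  refine h1.trans (Real.le_sqrt_of_sq_le ?_)
  rw [discrim] at h2
  have := mul_le_mul_of_nonneg_left hB hm
  nlinarith

end LBJ

/-- (Proposition 2.3: uniform positive lower bound of the Jacobian.)
For a classical solution with `ρ₀ ≥ 0`, `π ≥ 0` and `J₀ ≥ J̲ > 0`,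
`J(y,t) ≥ J̲ exp{-(4/μ)√(2m₀E₀) - ((γ-1)E₀/(μℓ₀)) e^{(4/μ)√(2m₀E₀)} t}`. -/
theorem lower_bound_J
    (L T μ γ : ℝ) (hL : 0 < L) (hT : 0 < T) (hμ : 0 < μ) (hγ : 1 < γ)
    (ρ₀ : ℝ → ℝ) (hρ₀ : ContinuousOn ρ₀ (Icc 0 L))
    (hρ₀nonneg : ∀ y ∈ Icc (0:ℝ) L, 0 ≤ ρ₀ y)
    (J v π Jt vy vt w πy πt Jy Jyt : ℝ → ℝ → ℝ)
    (hsol : ClassicalSolution L T μ γ ρ₀ J v π Jt vy vt w πy πt)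
    (hbc : ∀ t ∈ Icc (0:ℝ) T, v 0 t = 0 ∧ v L t = 0)
    (hJy : ∀ y ∈ Icc (0:ℝ) L, ∀ t ∈ Icc (0:ℝ) T,
      HasDerivWithinAt (fun x => J x t) (Jy y t) (Icc 0 L) y)
    (hJyt : ∀ y ∈ Icc (0:ℝ) L, ∀ t ∈ Icc (0:ℝ) T,
      HasDerivWithinAt (fun s => Jy y s) (Jyt y t) (Icc 0 T) t)
    (hJytcont : ContinuousOn (fun p : ℝ × ℝ => Jyt p.1 p.2) (Icc 0 L ×ˢ Icc 0 T))
    (hπnonneg : ∀ y ∈ Icc (0:ℝ) L, ∀ t ∈ Icc (0:ℝ) T, 0 ≤ π y t)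
    (Jlow : ℝ) (hJlow : 0 < Jlow)
    (hJ₀ : ∀ y ∈ Icc (0:ℝ) L, Jlow ≤ J y 0)
    (m₀ ℓ₀ E₀ : ℝ)
    (hm₀ : m₀ = ∫ y in (0:ℝ)..L, ρ₀ y)
    (hℓ₀ : ℓ₀ = ∫ y in (0:ℝ)..L, J y 0)
    (hE₀ : E₀ = ∫ y in (0:ℝ)..L, (ρ₀ y * (v y 0) ^ 2 / 2 + J y 0 * π y 0 / (γ - 1))) :
    ∀ y ∈ Icc (0:ℝ) L, ∀ t ∈ Icc (0:ℝ) T,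
      Jlow * Real.exp (-(4 / μ) * Real.sqrt (2 * m₀ * E₀)
          - ((γ - 1) * E₀ / (μ * ℓ₀)) * Real.exp ((4 / μ) * Real.sqrt (2 * m₀ * E₀)) * t)
        ≤ J y t := by
  have hL0 := hL.le
  have hT0 := hT.le
  have hLL : L ∈ Icc (0:ℝ) L := ⟨hL0, le_rfl⟩
  have h0L : (0:ℝ) ∈ Icc (0:ℝ) L := ⟨le_rfl, hL0⟩
  have h0T : (0:ℝ) ∈ Icc (0:ℝ) T := ⟨le_rfl, hT0⟩
  have hγ1 : 0 < γ - 1 := by linarith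
  have oo : ∀ t ∈ Ioo (0:ℝ) T, t ∈ Icc (0:ℝ) T := fun t ht => ⟨ht.1.le, ht.2.le⟩
  have up : ∀ {a : ℝ} {f : ℝ → ℝ} {f' x : ℝ}, HasDerivWithinAt f f' (Icc 0 a) x → x ∈ Ioo 0 a →
      HasDerivAt f f' x := fun h hx => h.hasDerivAt (Icc_mem_nhds hx.1 hx.2)
  obtain ⟨Jpos, contJ, contv, contPi, hJt, hvy, hvt, hw, hPiy, hPit, contJt, contvy, contvt, contw,
    contPiy, contPit, eq1, eq2, eq3⟩ := hsol
  have cρ : ContinuousOn (fun p : ℝ × ℝ => ρ₀ p.1) (Icc 0 L ×ˢ Icc 0 T) :=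
    hρ₀.comp continuousOn_fst (fun p hp => hp.1)
  have cq : ContinuousOn (fun p : ℝ × ℝ => vy p.1 p.2 / J p.1 p.2) (Icc 0 L ×ˢ Icc 0 T) :=
    contvy.div contJ (fun p hp => (Jpos _ hp.1 _ hp.2).ne')
  -- effective viscous flux
  set G : ℝ → ℝ → ℝ := fun y t => μ * (vy y t / J y t) - π y t with hG
  have cG : LBJ.CO L T G := (continuousOn_const.mul cq).sub contPi
  have hGy : ∀ y ∈ Icc (0:ℝ) L, ∀ t ∈ Icc (0:ℝ) T,
      HasDerivWithinAt (fun x => G x t) (ρ₀ y * vt y t) (Icc 0 L) y := by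
    intro y hy t ht
    have := ((hw y hy t ht).const_mul μ).sub (hPiy y hy t ht)
    refine this.congr_deriv ?_
    linarith [eq2 y hy t ht]
  -- conservation of length
  have hlen : ∀ t ∈ Icc (0:ℝ) T, ∫ y in (0:ℝ)..L, J y t = ℓ₀ := by
    intro t ht
    rw [hℓ₀]
    refine LBJ.eq_of_deriv (f := fun t => ∫ y in (0:ℝ)..L, J y t)
      (f' := fun t => ∫ y in (0:ℝ)..L, Jt y t) ((LBJ.contPrim hL0 hT0 contJ).slice' hLL)
      (fun s hs => LBJ.derivPrim contJ contJt (fun y hy s hs => up (hJt y hy s (oo s hs)) hs) hLL hs)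
      ?_ ht
    intro s hs
    have h1 : ∫ y in (0:ℝ)..L, Jt y s = ∫ y in (0:ℝ)..L, vy y s := by
      apply intervalIntegral.integral_congr
      intro x hx
      rw [uIcc_of_le hL0] at hx
      exact eq1 x hx s (oo s hs)
    have h2 := intervalIntegral.integral_eq_sub_of_hasDerivAt_of_le hL0
      (LBJ.CO.slice contv (oo s hs)) (fun x hx => up (hvy x ⟨hx.1.le, hx.2.le⟩ s (oo s hs)) hx)
      (LBJ.ii (LBJ.CO.slice contvy (oo s hs)) hLL)
    rw [h1, h2, (hbc s (oo s hs)).1, (hbc s (oo s hs)).2, sub_zero]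
  -- conservation of energy
  have cE : LBJ.CO L T (fun y t => ρ₀ y * (v y t) ^ 2 / 2 + J y t * π y t / (γ - 1)) :=
    ((cρ.mul (contv.pow 2)).div_const 2).add ((contJ.mul contPi).div_const _)
  have cvG : LBJ.CO L T (fun y t => vy y t * G y t + v y t * (ρ₀ y * vt y t)) :=
    (contvy.mul cG).add (contv.mul (cρ.mul contvt))
  have hen : ∀ t ∈ Icc (0:ℝ) T,
      ∫ y in (0:ℝ)..L, (ρ₀ y * (v y t) ^ 2 / 2 + J y t * π y t / (γ - 1)) = E₀ := by
    intro t ht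
    rw [hE₀]
    refine LBJ.eq_of_deriv
      (f := fun t => ∫ y in (0:ℝ)..L, (ρ₀ y * (v y t) ^ 2 / 2 + J y t * π y t / (γ - 1)))
      (f' := fun t => ∫ y in (0:ℝ)..L, (vy y t * G y t + v y t * (ρ₀ y * vt y t)))
      ((LBJ.contPrim hL0 hT0 cE).slice' hLL)
      (fun s hs => LBJ.derivPrim cE cvG ?_ hLL hs) ?_ ht
    · intro y hy s hs
      have a1 := (((up (hvt y hy s (oo s hs)) hs).pow 2).const_mul (ρ₀ y)).div_const 2
      have a2 := ((up (hJt y hy s (oo s hs)) hs).mul (up (hPit y hy s (oo s hs)) hs)).div_const (γ - 1)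
      refine (a1.add a2).congr_deriv ?_
      have e3 := eq3 y hy s (oo s hs)
      have hp := (Jpos y hy s (oo s hs)).ne'
      have e3' : πt y s = μ * (γ - 1) * (vy y s / J y s) ^ 2 - γ * (vy y s / J y s) * π y s := by
        linarith
      rw [e3', eq1 y hy s (oo s hs), hG]
      have := hγ1.ne'
      field_simp
      ring
    · intro s hs
      have hs' := oo s hs
      have h2 := intervalIntegral.integral_eq_sub_of_hasDerivAt_of_le hL0
        (f := fun y => v y s * G y s)
        ((LBJ.CO.slice contv hs').mul (cG.slice hs'))
        (fun x hx => (up (hvy x ⟨hx.1.le, hx.2.le⟩ s hs') hx).mul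
          (up (hGy x ⟨hx.1.le, hx.2.le⟩ s hs') hx))
        (LBJ.ii (cvG.slice hs') hLL)
      rw [h2, (hbc s (oo s hs)).1, (hbc s (oo s hs)).2]
      simp
  have cJP : LBJ.CO L T (fun y t => J y t * π y t) := contJ.mul contPi
  have cKE : LBJ.CO L T (fun y t => ρ₀ y * (v y t) ^ 2) := cρ.mul (contv.pow 2)
  have hsplit : ∀ t ∈ Icc (0:ℝ) T, (∫ y in (0:ℝ)..L, ρ₀ y * (v y t) ^ 2) / 2
      + (∫ y in (0:ℝ)..L, J y t * π y t) / (γ - 1) = E₀ := by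
    intro t ht
    rw [← hen t ht, intervalIntegral.integral_add ((LBJ.ii (cKE.slice ht) hLL).div_const 2)
      ((LBJ.ii (cJP.slice ht) hLL).div_const _), intervalIntegral.integral_div,
      intervalIntegral.integral_div]
  have hJPn : ∀ t ∈ Icc (0:ℝ) T, 0 ≤ ∫ y in (0:ℝ)..L, J y t * π y t := fun t ht =>
    intervalIntegral.integral_nonneg hL0
      (fun y hy => mul_nonneg (Jpos y hy t ht).le (hπnonneg y hy t ht))
  have hKEn : ∀ t ∈ Icc (0:ℝ) T, 0 ≤ ∫ y in (0:ℝ)..L, ρ₀ y * (v y t) ^ 2 := fun t ht =>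
    intervalIntegral.integral_nonneg hL0
      (fun y hy => mul_nonneg (hρ₀nonneg y hy) (sq_nonneg _))
  have hKE : ∀ t ∈ Icc (0:ℝ) T, ∫ y in (0:ℝ)..L, ρ₀ y * (v y t) ^ 2 ≤ 2 * E₀ := by
    intro t ht
    have := div_nonneg (hJPn t ht) hγ1.le
    linarith [hsplit t ht]
  have hJP : ∀ t ∈ Icc (0:ℝ) T, ∫ y in (0:ℝ)..L, J y t * π y t ≤ (γ - 1) * E₀ := by
    intro t ht
    have h1 : (∫ y in (0:ℝ)..L, J y t * π y t) / (γ - 1) ≤ E₀ := by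
      linarith [hsplit t ht, hKEn t ht]
    rw [div_le_iff₀ hγ1] at h1
    linarith
  -- momentum primitive
  set D : ℝ → ℝ → ℝ := fun y t => ∫ x in (0:ℝ)..y, ρ₀ x * v x t with hD
  have cρv : LBJ.CO L T (fun y t => ρ₀ y * v y t) := cρ.mul contv
  have cρvt : LBJ.CO L T (fun y t => ρ₀ y * vt y t) := cρ.mul contvt
  have cD : LBJ.CO L T D := LBJ.contPrim hL0 hT0 cρv
  have dD : ∀ y ∈ Icc (0:ℝ) L, ∀ t ∈ Ioo (0:ℝ) T,
      HasDerivAt (fun s => D y s) (G y t - G 0 t) t := by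
    intro y hy t ht
    have h1 := LBJ.derivPrim cρv cρvt
      (fun y hy s hs => (up (hvt y hy s (oo s hs)) hs).const_mul (ρ₀ y)) hy ht
    have h2 := intervalIntegral.integral_eq_sub_of_hasDerivAt_of_le hy.1
      (f := fun x => G x t) ((cG.slice (oo t ht)).mono (Icc_subset_Icc_right hy.2))
      (fun x hx => up (hGy x ⟨hx.1.le, hx.2.le.trans hy.2⟩ t (oo t ht)) ⟨hx.1, hx.2.trans_le hy.2⟩)
      (LBJ.ii (cρvt.slice (oo t ht)) hy)
    rw [h2] at h1
    exact h1
  set S := Real.sqrt (2 * m₀ * E₀) with hS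
  have bD : ∀ y ∈ Icc (0:ℝ) L, ∀ t ∈ Icc (0:ℝ) T, |D y t| ≤ S := by
    intro y hy t ht
    have := LBJ.cs hL0 hρ₀ (LBJ.CO.slice contv ht) hρ₀nonneg (hKE t ht) hy
    rw [← hm₀] at this
    rw [hS, show 2 * m₀ * E₀ = m₀ * (2 * E₀) by ring]
    exact this
  -- time primitive of boundary flux
  obtain ⟨Gc, hGc, hGcG⟩ := LBJ.ext hL0 hT0 cG
  have hGc0 : Continuous (fun s => Gc 0 s) :=
    hGc.comp (f := fun s : ℝ => ((0:ℝ), s)) (by fun_prop)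
  set g : ℝ → ℝ := fun t => ∫ s in (0:ℝ)..t, Gc 0 s with hg
  have dg : ∀ t, HasDerivAt g (Gc 0 t) t := fun t => (hGc0.integral_hasStrictDerivAt 0 t).hasDerivAt
  have cg : Continuous g := continuous_iff_continuousAt.2 fun t => (dg t).continuousAt
  have g0 : g 0 = 0 := by simp [hg]
  -- A = - log H
  set A : ℝ → ℝ → ℝ := fun y t => -((g t + (D y t - D y 0)) / μ) with hA
  have cD0 : LBJ.CO L T (fun y _ => D y 0) :=
    (cD.slice h0T).comp continuousOn_fst (fun p hp => hp.1)
  have cA : LBJ.CO L T A :=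
    ((((cg.comp continuous_snd).continuousOn).add (cD.sub cD0)).div_const μ).neg
  have dA : ∀ y ∈ Icc (0:ℝ) L, ∀ t ∈ Ioo (0:ℝ) T, HasDerivAt (fun s => A y s) (-(G y t / μ)) t := by
    intro y hy t ht
    have := ((((dg t).add ((dD y hy t ht).sub_const (D y 0))).div_const μ).neg)
    refine this.congr_deriv ?_
    rw [hGcG 0 h0L t (oo t ht)]
    ring
  set P : ℝ → ℝ → ℝ := fun y t => J y t * Real.exp (A y t) with hP
  have cP : LBJ.CO L T P := contJ.mul cA.rexp
  have cPt : LBJ.CO L T (fun y t => π y t * P y t / μ) := (contPi.mul cP).div_const μ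
  have dP : ∀ y ∈ Icc (0:ℝ) L, ∀ t ∈ Ioo (0:ℝ) T,
      HasDerivAt (fun s => P y s) (π y t * P y t / μ) t := by
    intro y hy t ht
    have := (up (hJt y hy t (oo t ht)) ht).mul (dA y hy t ht).exp
    refine this.congr_deriv ?_
    rw [eq1 y hy t (oo t ht), hP, hG]
    have hp := (Jpos y hy t (oo t ht)).ne'
    field_simp
    ring
  have P0 : ∀ y, P y 0 = J y 0 := by
    intro y
    simp [hP, hA, g0]
  have Ppos : ∀ y ∈ Icc (0:ℝ) L, ∀ t ∈ Icc (0:ℝ) T, 0 < P y t := fun y hy t ht =>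
    mul_pos (Jpos y hy t ht) (Real.exp_pos _)
  have Pge : ∀ y ∈ Icc (0:ℝ) L, ∀ t ∈ Icc (0:ℝ) T, J y 0 ≤ P y t := by
    intro y hy t ht
    have := LBJ.le_of_deriv (f := fun s => P y s) (cP.slice' hy) (dP y hy)
      (fun s hs => div_nonneg (mul_nonneg (hπnonneg y hy s (oo s hs)) (Ppos y hy s (oo s hs)).le)
        hμ.le) ht
    rwa [P0] at this
  set K := 2 * S / μ with hK
  have Aub : ∀ y ∈ Icc (0:ℝ) L, ∀ t ∈ Icc (0:ℝ) T, A y t ≤ K - g t / μ := by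
    intro y hy t ht
    have h1 := abs_le.1 (bD y hy t ht)
    have h2 := abs_le.1 (bD y hy 0 h0T)
    simp only [hA, hK]
    rw [← sub_div, ← neg_div]
    refine div_le_div_of_nonneg_right ?_ hμ.le
    linarith
  have Alb : ∀ y ∈ Icc (0:ℝ) L, ∀ t ∈ Icc (0:ℝ) T, -A y t ≤ K + g t / μ := by
    intro y hy t ht
    have h1 := abs_le.1 (bD y hy t ht)
    have h2 := abs_le.1 (bD y hy 0 h0T)
    simp only [hA, hK]
    rw [← add_div, neg_neg]
    refine div_le_div_of_nonneg_right ?_ hμ.le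
    linarith
  have JP : ∀ y t, J y t = P y t * Real.exp (-A y t) := by
    intro y t
    simp only [hP]
    rw [mul_assoc, ← Real.exp_add]
    simp
  set Q : ℝ → ℝ := fun t => ∫ y in (0:ℝ)..L, P y t with hQ
  have cQ : ContinuousOn Q (Icc 0 T) := (LBJ.contPrim hL0 hT0 cP).slice' hLL
  have dQ : ∀ t ∈ Ioo (0:ℝ) T, HasDerivAt Q (∫ y in (0:ℝ)..L, π y t * P y t / μ) t :=
    fun t ht => LBJ.derivPrim cP cPt dP hLL ht
  have Q0 : Q 0 = ℓ₀ := by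
    simp only [hQ, P0]
    rw [hℓ₀]
  have hℓpos : 0 < ℓ₀ := by
    rw [hℓ₀]
    exact intervalIntegral.intervalIntegral_pos_of_pos_on (LBJ.ii (LBJ.CO.slice contJ h0T) hLL)
      (fun x hx => Jpos x ⟨hx.1.le, hx.2.le⟩ 0 h0T) hL
  -- ℓ₀ ≤ e^{K+g} Q
  have hlQ : ∀ t ∈ Icc (0:ℝ) T, ℓ₀ ≤ Q t * Real.exp (K + g t / μ) := by
    intro t ht
    rw [← hlen t ht, hQ, ← intervalIntegral.integral_mul_const]
    apply intervalIntegral.integral_mono_on hL0 (LBJ.ii (LBJ.CO.slice contJ ht) hLL)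
      ((LBJ.ii (cP.slice ht) hLL).mul_const _)
    intro y hy
    rw [JP]
    exact mul_le_mul_of_nonneg_left (Real.exp_le_exp.2 (Alb y hy t ht)) (Ppos y hy t ht).le
  have hgQ : ∀ t ∈ Icc (0:ℝ) T, Real.exp (-(g t / μ)) ≤ Real.exp K * Q t / ℓ₀ := by
    intro t ht
    rw [le_div_iff₀ hℓpos]
    calc Real.exp (-(g t / μ)) * ℓ₀ ≤ Real.exp (-(g t / μ)) * (Q t * Real.exp (K + g t / μ)) :=
          mul_le_mul_of_nonneg_left (hlQ t ht) (Real.exp_pos _).le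
      _ = (Real.exp (-(g t / μ)) * Real.exp (K + g t / μ)) * Q t := by ring
      _ = Real.exp K * Q t := by rw [← Real.exp_add]; congr 2; ring
  have hE0n : 0 ≤ E₀ := by linarith [hKE 0 h0T, hKEn 0 h0T]
  set C := (γ - 1) * E₀ / (μ * ℓ₀) * Real.exp (K + K) with hC
  have hQ' : ∀ t ∈ Ioo (0:ℝ) T, ∫ y in (0:ℝ)..L, π y t * P y t / μ ≤ C * Q t := by
    intro t ht
    have ht' := oo t ht
    have h1 : ∫ y in (0:ℝ)..L, π y t * P y t / μ
        ≤ ∫ y in (0:ℝ)..L, J y t * π y t * (Real.exp (K - g t / μ) / μ) := by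
      apply intervalIntegral.integral_mono_on hL0 (LBJ.ii (cPt.slice ht') hLL)
        ((LBJ.ii (cJP.slice ht') hLL).mul_const _)
      intro y hy
      have h2 := Real.exp_le_exp.2 (Aub y hy t ht')
      have h3 := mul_nonneg (Jpos y hy t ht').le (hπnonneg y hy t ht')
      rw [← mul_div_assoc]
      refine div_le_div_of_nonneg_right ?_ hμ.le
      calc π y t * P y t = J y t * π y t * Real.exp (A y t) := by simp only [hP]; ring
        _ ≤ _ := by gcongr
    rw [intervalIntegral.integral_mul_const] at h1
    refine h1.trans ?_
    calc (∫ y in (0:ℝ)..L, J y t * π y t) * (Real.exp (K - g t / μ) / μ)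
        ≤ ((γ - 1) * E₀) * (Real.exp (K - g t / μ) / μ) := by
          gcongr
          exact hJP t ht'
      _ = ((γ - 1) * E₀ / μ * Real.exp K) * Real.exp (-(g t / μ)) := by
          rw [sub_eq_add_neg K, Real.exp_add]; ring
      _ ≤ ((γ - 1) * E₀ / μ * Real.exp K) * (Real.exp K * Q t / ℓ₀) := by
          gcongr
          exact hgQ t ht'
      _ = C * Q t := by
          rw [hC, Real.exp_add]
          field_simp
  have hQub : ∀ t ∈ Icc (0:ℝ) T, Q t ≤ ℓ₀ * Real.exp (C * t) := by
    intro t ht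
    have := LBJ.gron cQ dQ hQ' ht
    rwa [Q0] at this
  intro y hy t ht
  have hfin : Real.exp (-(g t / μ)) ≤ Real.exp (K + C * t) := by
    refine (hgQ t ht).trans ?_
    rw [div_le_iff₀ hℓpos, Real.exp_add]
    calc Real.exp K * Q t ≤ Real.exp K * (ℓ₀ * Real.exp (C * t)) := by
          gcongr
          exact hQub t ht
      _ = _ := by ring
  have hfin' := Real.exp_le_exp.1 hfin
  have hKK : 4 / μ * S = K + K := by rw [hK]; ring
  rw [show -(4 / μ) * S = -(4 / μ * S) by ring, hKK, JP y t]
  apply mul_le_mul ((hJ₀ y hy).trans (Pge y hy t ht)) _ (Real.exp_pos _).le (Ppos y hy t ht).le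
  apply Real.exp_le_exp.2
  linarith [Aub y hy t ht]
end

section
/- Let ρ₀ ∈ C¹([0,L]) with ρ₀ > 0, and let (J, v, π) be a classical solution of (E1)–(E3) on [0,L]×[0,T] with boundary condition v(0,t) = v(L,t) = 0, such that J, v are twice continuously differentiable and π is continuously differentiable on [0,L]×[0,T]. Define G := μ (∂_y v)/J − π. Then G satisfies pointwise on (0,L)×(0,T) the equation ∂_t G − (μ/J) ∂_y( (∂_y G)/ρ₀ ) = −γ ((∂_y v)/J) G, and moreover ∂_y G(0,t) = ∂_y G(L,t) = 0 for all t ∈ (0,T). -/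
open Set MeasureTheory

theorem rect_mvt (U V : Set ℝ) (f fy fyt : ℝ → ℝ → ℝ)
    (hy : ∀ y ∈ U, ∀ t ∈ V, HasDerivAt (fun x => f x t) (fy y t) y)
    (hyt : ∀ y ∈ U, ∀ t ∈ V, HasDerivAt (fun s => fy y s) (fyt y t) t)
    (a b c d : ℝ) (hab : a < b) (hcd : c < d) (hU : Icc a b ⊆ U) (hV : Icc c d ⊆ V) :
    ∃ ξ ∈ Ioo a b, ∃ η ∈ Ioo c d,
      f b d - f b c - f a d + f a c = (b - a) * (d - c) * fyt ξ η := by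
  have h1 : ∀ x ∈ Icc a b,
      HasDerivAt (fun x => f x d - f x c) (fy x d - fy x c) x := fun x hx =>
    (hy x (hU hx) d (hV ⟨hcd.le, le_rfl⟩)).sub (hy x (hU hx) c (hV ⟨le_rfl, hcd.le⟩))
  obtain ⟨ξ, hξ, e1⟩ := exists_hasDerivAt_eq_slope (fun x => f x d - f x c)
    (fun x => fy x d - fy x c) hab
    (fun x hx => (h1 x hx).continuousAt.continuousWithinAt)
    (fun x hx => h1 x (Ioo_subset_Icc_self hx))
  have h2 : ∀ s ∈ Icc c d, HasDerivAt (fun s => fy ξ s) (fyt ξ s) s := fun s hs =>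
    hyt ξ (hU (Ioo_subset_Icc_self hξ)) s (hV hs)
  obtain ⟨η, hη, e2⟩ := exists_hasDerivAt_eq_slope (fun s => fy ξ s)
    (fun s => fyt ξ s) hcd
    (fun x hx => (h2 x hx).continuousAt.continuousWithinAt)
    (fun x hx => h2 x (Ioo_subset_Icc_self hx))
  refine ⟨ξ, hξ, η, hη, ?_⟩
  have hb : b - a ≠ 0 := by linarith
  have hd : d - c ≠ 0 := by linarith
  rw [eq_div_iff hb] at e1
  rw [eq_div_iff hd] at e2
  linear_combination (-1) * e1 - (b - a) * e2

theorem mixed_symm (U V : Set ℝ) (hUo : IsOpen U) (hVo : IsOpen V)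
    (f fy ft fyt fty : ℝ → ℝ → ℝ)
    (hy : ∀ y ∈ U, ∀ t ∈ V, HasDerivAt (fun x => f x t) (fy y t) y)
    (ht : ∀ y ∈ U, ∀ t ∈ V, HasDerivAt (fun s => f y s) (ft y t) t)
    (hyt : ∀ y ∈ U, ∀ t ∈ V, HasDerivAt (fun s => fy y s) (fyt y t) t)
    (hty : ∀ y ∈ U, ∀ t ∈ V, HasDerivAt (fun x => ft x t) (fty y t) y)
    (y t : ℝ) (hyU : y ∈ U) (htV : t ∈ V)
    (c1 : ContinuousAt (fun p : ℝ × ℝ => fyt p.1 p.2) (y, t))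
    (c2 : ContinuousAt (fun p : ℝ × ℝ => fty p.1 p.2) (y, t)) :
    fyt y t = fty y t := by
  refine eq_of_forall_dist_le fun ε hε => ?_
  obtain ⟨δ1, p1, h1⟩ := Metric.continuousAt_iff.1 c1 (ε / 2) (by positivity)
  obtain ⟨δ2, p2, h2⟩ := Metric.continuousAt_iff.1 c2 (ε / 2) (by positivity)
  obtain ⟨δ3, p3, h3⟩ := Metric.isOpen_iff.1 hUo y hyU
  obtain ⟨δ4, p4, h4⟩ := Metric.isOpen_iff.1 hVo t htV
  obtain ⟨δ, p, hδ⟩ := exists_between (lt_min (lt_min p1 p2) (lt_min p3 p4))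
  simp only [lt_min_iff] at hδ
  obtain ⟨⟨q1, q2⟩, q3, q4⟩ := hδ
  have hU : Icc y (y + δ) ⊆ U := fun x hx => h3 (by
    rw [Metric.mem_ball, Real.dist_eq, abs_lt]; constructor <;> linarith [hx.1, hx.2])
  have hV : Icc t (t + δ) ⊆ V := fun x hx => h4 (by
    rw [Metric.mem_ball, Real.dist_eq, abs_lt]; constructor <;> linarith [hx.1, hx.2])
  obtain ⟨ξ, hξ, η, hη, e⟩ := rect_mvt U V f fy fyt hy hyt y (y + δ) t (t + δ)
    (by linarith) (by linarith) hU hV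
  obtain ⟨η', hη', ξ', hξ', e'⟩ := rect_mvt V U (fun s x => f x s) (fun s x => ft x s)
    (fun s x => fty x s) (fun s hs x hx => ht x hx s hs) (fun s hs x hx => hty x hx s hs)
    t (t + δ) y (y + δ) (by linarith) (by linarith) hV hU
  have key : fyt ξ η = fty ξ' η' := by
    have hne : δ * δ ≠ 0 := by positivity
    apply mul_left_cancel₀ hne
    linear_combination e' - e
  have d1 := @h1 (ξ, η) (by
    rw [Prod.dist_eq, max_lt_iff, Real.dist_eq, Real.dist_eq, abs_lt, abs_lt]
    refine ⟨⟨?_, ?_⟩, ?_, ?_⟩ <;> simp only <;> linarith [hξ.1, hξ.2, hη.1, hη.2])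
  have d2 := @h2 (ξ', η') (by
    rw [Prod.dist_eq, max_lt_iff, Real.dist_eq, Real.dist_eq, abs_lt, abs_lt]
    refine ⟨⟨?_, ?_⟩, ?_, ?_⟩ <;> simp only <;> linarith [hξ'.1, hξ'.2, hη'.1, hη'.2])
  simp only at d1 d2
  rw [key, dist_comm] at d1
  linarith [dist_triangle (fyt y t) (fty ξ' η') (fty y t)]

/-- (Equation (EQG) and boundary condition (BCG) for the effective
viscous flux `G = μ(∂_y v)/J - π`.) For a smooth enough classical solution with
`ρ₀ ∈ C¹`, `ρ₀ > 0`, and `v(0,t) = v(L,t) = 0`, `G` satisfies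
`∂ₜG - (μ/J) ∂_y((∂_y G)/ρ₀) = -γ((∂_y v)/J) G` on `(0,L)×(0,T)` and
`∂_y G(0,t) = ∂_y G(L,t) = 0`. -/
theorem effective_viscous_flux_equation
    (L T μ γ : ℝ) (hL : 0 < L) (hT : 0 < T) (hμ : 0 < μ) (hγ : 1 < γ)
    (ρ₀ ρ₀d : ℝ → ℝ)
    (hρ₀d : ∀ y ∈ Icc (0:ℝ) L, HasDerivWithinAt ρ₀ (ρ₀d y) (Icc 0 L) y)
    (hρ₀dcont : ContinuousOn ρ₀d (Icc 0 L))
    (hρ₀pos : ∀ y ∈ Icc (0:ℝ) L, 0 < ρ₀ y)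
    (J v π Jt vy vt w πy πt Gy Gt Q vyt vty : ℝ → ℝ → ℝ)
    (hsol : ClassicalSolution L T μ γ ρ₀ J v π Jt vy vt w πy πt)
    (hbc : ∀ t ∈ Icc (0:ℝ) T, v 0 t = 0 ∧ v L t = 0)
    (hGy : ∀ y ∈ Icc (0:ℝ) L, ∀ t ∈ Icc (0:ℝ) T,
      HasDerivWithinAt (fun x => μ * vy x t / J x t - π x t) (Gy y t) (Icc 0 L) y)
    (hGt : ∀ y ∈ Icc (0:ℝ) L, ∀ t ∈ Icc (0:ℝ) T,
      HasDerivWithinAt (fun s => μ * vy y s / J y s - π y s) (Gt y t) (Icc 0 T) t)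
    (hQ : ∀ y ∈ Icc (0:ℝ) L, ∀ t ∈ Icc (0:ℝ) T,
      HasDerivWithinAt (fun x => Gy x t / ρ₀ x) (Q y t) (Icc 0 L) y)
    (hvyt : ∀ y ∈ Icc (0:ℝ) L, ∀ t ∈ Icc (0:ℝ) T,
      HasDerivWithinAt (fun s => vy y s) (vyt y t) (Icc 0 T) t)
    (hvty : ∀ y ∈ Icc (0:ℝ) L, ∀ t ∈ Icc (0:ℝ) T,
      HasDerivWithinAt (fun x => vt x t) (vty y t) (Icc 0 L) y)
    (hGycont : ContinuousOn (fun p : ℝ × ℝ => Gy p.1 p.2) (Icc 0 L ×ˢ Icc 0 T))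
    (hGtcont : ContinuousOn (fun p : ℝ × ℝ => Gt p.1 p.2) (Icc 0 L ×ˢ Icc 0 T))
    (hQcont : ContinuousOn (fun p : ℝ × ℝ => Q p.1 p.2) (Icc 0 L ×ˢ Icc 0 T))
    (hvytcont : ContinuousOn (fun p : ℝ × ℝ => vyt p.1 p.2) (Icc 0 L ×ˢ Icc 0 T))
    (hvtycont : ContinuousOn (fun p : ℝ × ℝ => vty p.1 p.2) (Icc 0 L ×ˢ Icc 0 T)) :
    (∀ y ∈ Ioo (0:ℝ) L, ∀ t ∈ Ioo (0:ℝ) T,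
      Gt y t - (μ / J y t) * Q y t
        = -γ * (vy y t / J y t) * (μ * vy y t / J y t - π y t)) ∧
    (∀ t ∈ Ioo (0:ℝ) T, Gy 0 t = 0 ∧ Gy L t = 0) := by
  have huL : ∀ y ∈ Icc (0:ℝ) L, UniqueDiffWithinAt ℝ (Icc 0 L) y := uniqueDiffOn_Icc hL
  have huT : ∀ t ∈ Icc (0:ℝ) T, UniqueDiffWithinAt ℝ (Icc 0 T) t := uniqueDiffOn_Icc hT
  have hGyeq : ∀ y ∈ Icc (0:ℝ) L, ∀ t ∈ Icc (0:ℝ) T, Gy y t = ρ₀ y * vt y t := by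
    intro y hy t ht
    have h := ((hsol.hw y hy t ht).const_mul μ).sub (hsol.hPiy y hy t ht)
    have h' : HasDerivWithinAt (fun x => μ * vy x t / J x t - π x t) (μ * w y t - πy y t)
        (Icc 0 L) y := by
      refine h.congr (fun x _ => ?_) ?_ <;> simp [mul_div_assoc]
    have e := (huL y hy).eq_deriv _ (hGy y hy t ht) h'
    linarith [hsol.eq2 y hy t ht]
  have hvt0 : ∀ y ∈ Icc (0:ℝ) L, (∀ t ∈ Icc (0:ℝ) T, v y t = 0) →
      ∀ t ∈ Icc (0:ℝ) T, vt y t = 0 := by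
    intro y hy h0 t ht
    refine (huT t ht).eq_deriv _ (hsol.hvt y hy t ht) ?_
    exact (hasDerivWithinAt_const t (Icc 0 T) (0:ℝ)).congr (fun s hs => h0 s hs) (h0 t ht)
  have m0 : (0:ℝ) ∈ Icc 0 L := ⟨le_rfl, hL.le⟩
  have mL : L ∈ Icc 0 L := ⟨hL.le, le_rfl⟩
  refine ⟨?_, ?_⟩
  · intro y hy t ht
    have hy' := Ioo_subset_Icc_self hy
    have ht' := Ioo_subset_Icc_self ht
    have nL : ∀ x ∈ Ioo (0:ℝ) L, Icc 0 L ∈ nhds x := fun x hx => Icc_mem_nhds hx.1 hx.2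
    have nT : ∀ x ∈ Ioo (0:ℝ) T, Icc 0 T ∈ nhds x := fun x hx => Icc_mem_nhds hx.1 hx.2
    have nn : Icc 0 L ×ˢ Icc 0 T ∈ nhds (y, t) := prod_mem_nhds (nL y hy) (nT t ht)
    have hs : vyt y t = vty y t := by
      refine mixed_symm (Ioo 0 L) (Ioo 0 T) isOpen_Ioo isOpen_Ioo v vy vt vyt vty
        ?_ ?_ ?_ ?_ y t hy ht (hvytcont.continuousAt nn) (hvtycont.continuousAt nn)
      · exact fun x hx s hs => (hsol.hvy x (Ioo_subset_Icc_self hx) s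
          (Ioo_subset_Icc_self hs)).hasDerivAt (nL x hx)
      · exact fun x hx s hs => (hsol.hvt x (Ioo_subset_Icc_self hx) s
          (Ioo_subset_Icc_self hs)).hasDerivAt (nT s hs)
      · exact fun x hx s hs => (hvyt x (Ioo_subset_Icc_self hx) s
          (Ioo_subset_Icc_self hs)).hasDerivAt (nT s hs)
      · exact fun x hx s hs => (hvty x (Ioo_subset_Icc_self hx) s
          (Ioo_subset_Icc_self hs)).hasDerivAt (nL x hx)
    have hQe : Q y t = vty y t := by
      refine (huL y hy').eq_deriv _ (hQ y hy' t ht') ?_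
      have hc : ∀ x ∈ Icc (0:ℝ) L, Gy x t / ρ₀ x = vt x t := fun x hx => by
        rw [hGyeq x hx t ht', mul_div_cancel_left₀ _ (hρ₀pos x hx).ne']
      exact (hvty y hy' t ht').congr hc (hc y hy')
    have hJ := (hsol.Jpos y hy' t ht').ne'
    have hGe := (huT t ht').eq_deriv _ (hGt y hy' t ht')
      ((((hvyt y hy' t ht').const_mul μ).div (hsol.hJt y hy' t ht') hJ).sub
        (hsol.hPit y hy' t ht'))
    have e3 := hsol.eq3 y hy' t ht'
    have e3' : πt y t = μ * (γ - 1) * (vy y t / J y t) ^ 2 - γ * (vy y t / J y t) * π y t := by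
      linarith
    rw [hGe, hQe, e3', hsol.eq1 y hy' t ht', hs]
    field_simp
    ring
  · intro t ht
    have ht' := Ioo_subset_Icc_self ht
    rw [hGyeq 0 m0 t ht', hGyeq L mL t ht', hvt0 0 m0 (fun s hs => (hbc s hs).1) t ht',
      hvt0 L mL (fun s hs => (hbc s hs).2) t ht']
    simp
end

section
/- Let (J, v, π) be a classical solution of (E1)–(E3) on [0,L]×[0,T] with π(·,0) = π₀ ≥ 0 on [0,L], and set G := μ (∂_y v)/J − π. Then for all (y,t) ∈ [0,L]×[0,T]: 0 ≤ π(y,t) ≤ π₀(y) + (γ²/(4μ)) ∫₀ᵗ G(y,s)² ds. -/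
open Set MeasureTheory

/-- (Pointwise two-sided pressure bound, core of Proposition 2.5.)
For a classical solution with `π(·,0) = π₀ ≥ 0`, and `G = μ(∂_y v)/J - π`,
`0 ≤ π(y,t) ≤ π₀(y) + (γ²/(4μ)) ∫₀ᵗ G(y,s)² ds`. -/
theorem pressure_two_sided_bound
    (L T μ γ : ℝ) (hL : 0 < L) (hT : 0 < T) (hμ : 0 < μ) (hγ : 1 < γ)
    (ρ₀ : ℝ → ℝ) (hρ₀ : ContinuousOn ρ₀ (Icc 0 L))
    (J v π Jt vy vt w πy πt : ℝ → ℝ → ℝ)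
    (hsol : ClassicalSolution L T μ γ ρ₀ J v π Jt vy vt w πy πt)
    (hπ₀ : ∀ y ∈ Icc (0:ℝ) L, 0 ≤ π y 0) :
    ∀ y ∈ Icc (0:ℝ) L, ∀ t ∈ Icc (0:ℝ) T,
      0 ≤ π y t ∧
      π y t ≤ π y 0
        + (γ ^ 2 / (4 * μ)) * ∫ s in (0:ℝ)..t, (μ * vy y s / J y s - π y s) ^ 2 := by
  intro y hy t ht
  have hmaps : MapsTo (fun s : ℝ => (y, s)) (Icc 0 T) (Icc 0 L ×ˢ Icc 0 T) :=
    fun s hs => ⟨hy, hs⟩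
  have hc : ContinuousOn (fun s : ℝ => (y, s)) (Icc 0 T) := by fun_prop
  have cJ : ContinuousOn (fun s => J y s) (Icc 0 T) := hsol.contJ.comp hc hmaps
  have cP : ContinuousOn (fun s => π y s) (Icc 0 T) := hsol.contPi.comp hc hmaps
  have cvy : ContinuousOn (fun s => vy y s) (Icc 0 T) := hsol.contvy.comp hc hmaps
  have cG : ContinuousOn (fun s => (γ ^ 2 / (4 * μ)) * (μ * vy y s / J y s - π y s) ^ 2)
      (Icc 0 T) := by
    refine continuousOn_const.mul (ContinuousOn.pow (ContinuousOn.sub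
      (ContinuousOn.div (continuousOn_const.mul cvy) cJ ?_) cP) 2)
    intro s hs
    exact (hsol.Jpos y hy s hs).ne'
  have hsub : Icc 0 t ⊆ Icc 0 T := Icc_subset_Icc_right ht.2
  have hnhds : ∀ s ∈ Ioo 0 T, Icc 0 T ∈ nhds s := fun s hs => Icc_mem_nhds hs.1 hs.2
  constructor
  · have hmono : MonotoneOn (fun s => (J y s) ^ γ * π y s) (Icc 0 T) := by
      refine monotoneOn_of_hasDerivWithinAt_nonneg (convex_Icc 0 T)
        (f' := fun s => (J y s) ^ γ * (μ * (γ - 1) * (vy y s / J y s) ^ 2)) ?_ ?_ ?_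
      · refine ContinuousOn.mul (cJ.rpow_const ?_) cP
        intro s hs
        exact Or.inl (hsol.Jpos y hy s hs).ne'
      · intro s hs
        have hs' : s ∈ Icc 0 T := interior_subset hs
        have hJ := hsol.Jpos y hy s hs'
        have h1 := ((hsol.hJt y hy s hs').rpow_const (p := γ) (Or.inl hJ.ne')).mul
          (hsol.hPit y hy s hs')
        refine (h1.mono interior_subset).congr_deriv ?_
        rw [← hsol.eq3 y hy s hs', hsol.eq1 y hy s hs', Real.rpow_sub_one hJ.ne']
        field_simp
        ring
      · intro s hs
        have hs' : s ∈ Icc 0 T := interior_subset hs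
        have hJ := hsol.Jpos y hy s hs'
        have : 0 < γ - 1 := by linarith
        positivity
    have h0 : (0:ℝ) ∈ Icc 0 T := ⟨le_rfl, hT.le⟩
    have h := hmono h0 ht ht.1
    have hJ0 := Real.rpow_pos_of_pos (hsol.Jpos y hy 0 h0) γ
    have hJ1 := Real.rpow_pos_of_pos (hsol.Jpos y hy t ht) γ
    have h2 : 0 ≤ (J y t) ^ γ * π y t := (mul_nonneg hJ0.le (hπ₀ y hy)).trans h
    exact nonneg_of_mul_nonneg_right h2 hJ1
  · have h := intervalIntegral.sub_le_integral_of_hasDeriv_right_of_le (a := 0) (b := t)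
      (g := fun s => π y s) (g' := fun s => πt y s)
      (φ := fun s => (γ ^ 2 / (4 * μ)) * (μ * vy y s / J y s - π y s) ^ 2)
      ht.1 (cP.mono hsub) ?_ ((cG.mono hsub).integrableOn_Icc) ?_
    · rw [intervalIntegral.integral_const_mul] at h
      linarith
    · intro s hs
      have hs' : s ∈ Ioo 0 T := ⟨hs.1, hs.2.trans_le ht.2⟩
      exact ((hsol.hPit y hy s (Ioo_subset_Icc_self hs')).hasDerivAt
        (hnhds s hs')).hasDerivWithinAt
    · intro s hs
      have hs' := hsub (Ioo_subset_Icc_self hs)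
      have e := hsol.eq3 y hy s hs'
      have hd : μ * vy y s / J y s = μ * (vy y s / J y s) := by ring
      simp only [hd]
      generalize vy y s / J y s = a at e
      have key : γ ^ 2 / (4 * μ) * (μ * a - π y s) ^ 2 - πt y s
          = (π y s - (γ - 2) / 2 * (μ * a - π y s)) ^ 2 / μ := by
        rw [eq_sub_of_add_eq e]
        field_simp
        ring
      have : 0 ≤ (π y s - (γ - 2) / 2 * (μ * a - π y s)) ^ 2 / μ := by positivity
      linarith
end
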